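/- There exists a constant C₁ such that for all R ≥ 0: 0 ≤ λ₁(Γ) − λ₁(Γ_R) ≤ C₁ e^{−2Rω}, where ω=√(π²−λ₁(Γ)); i.e., the first mixed eigenvalue of the truncated guide converges exponentially fast, with rate 2ω, to the first Dirichlet eigenvalue of the infinite broken guide. -/

import Mathlib

/-!
*Lower bound.* Cutting the infinite guide at distance `R` and imposing Neumann conditions on the cuts
can only lower the energy. The half-strips cut off carry energy at least `π²` per unit mass by
Poincaré's inequality in the transverse direction, and `λ₁(Γ) < π²` (`lamG_lt`, by an explicit trial
function), so `λ₁(Γ_R)` cannot exceed `λ₁(Γ)`: `lamR_le_lamG`.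

*Upper bound.* Let `u` be admissible on `Γ_R`. Extend `u` to the guide by reflection across the two
cuts and multiply by a cut-off `α` in the longitudinal variable, with `α = 1` on the core, `α = 0`
beyond `2R`, and in between `α(t) = (1 + tanh (ω (R - t)) / tanh (ωR)) / 2`. The result `extU ω R u`
is Lipschitz with compact support and vanishes off `Γ`, and such functions may be used as trial
functions for `λ₁(Γ)`, by truncation and mollification (`lamG_mul_le_lip`). On an arm, add the values
at mirror points `t` and `2R - t`. Since `α(t)² + α(2R - t)² ≤ 1`, Poincaré's inequality controls the
transverse energy, and because of the choice of `α` the longitudinal energy is controlled by a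
perfect square plus an exact derivative. All that is lost is the boundary term
`(ω / 2) (coth ωR - tanh ωR) ∫ u(0, y)² dy` (`arm_le`). These traces are bounded by the Dirichlet
energy of `u` in the core (`trace_le`), which yields
`λ₁(Γ) ∫ u² ≤ (1 + ω (coth ωR - tanh ωR)) ∫ |∇u|²` (`energy_le`) and therefore
`λ₁(Γ) - λ₁(Γ_R) ≤ λ₁(Γ) ω (coth ωR - tanh ωR)`. The right-hand side is `O(e^{-2ωR})` for `R ≥ 1`; for
`R < 1` the claim is trivial. No regularity or existence of eigenfunctions is needed.
-/

noncomputable section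
open MeasureTheory Set Real

/-- The interval `I = (-1,0)`. -/
def II : Set ℝ := Set.Ioo (-1) 0

/-- The broken guide `Γ = {x ∈ ℝ² : -1 < min(x₁,x₂) < 0}`. -/
def Gam : Set (ℝ × ℝ) := {p | -1 < min p.1 p.2 ∧ min p.1 p.2 < 0}

/-- The box `□_L = {x : max(|x₁+1|,|x₂+1|) < L}`. -/
def Box (L : ℝ) : Set (ℝ × ℝ) := {p | |p.1 + 1| < L ∧ |p.2 + 1| < L}

/-- The finite guide `Γ_R = Γ ∩ □_{R+1}`. -/
def GamR (R : ℝ) : Set (ℝ × ℝ) := Gam ∩ Box (R + 1)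

/-- The Neumann part `Σ_R = ∂Γ_R ∩ ∂□_{R+1}` of the boundary. -/
def Sig (R : ℝ) : Set (ℝ × ℝ) := frontier (GamR R) ∩ frontier (Box (R + 1))

/-- The Dirichlet part `∂Γ_R ∖ Σ_R` of the boundary. -/
def DirB (R : ℝ) : Set (ℝ × ℝ) := frontier (GamR R) \ Sig R

/-- Squared gradient `|∇u|² = (∂₁u)² + (∂₂u)²`. -/
def gradSq2 (u : ℝ × ℝ → ℝ) (p : ℝ × ℝ) : ℝ :=
  (fderiv ℝ u p (1, 0)) ^ 2 + (fderiv ℝ u p (0, 1)) ^ 2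

/-- Admissible functions for the mixed problem on `Γ_R`: `C¹` up to the boundary
(modelled by a globally `C¹` extension) vanishing on the Dirichlet part. -/
def AdmR (R : ℝ) (u : ℝ × ℝ → ℝ) : Prop :=
  ContDiff ℝ 1 u ∧ ∀ p ∈ DirB R, u p = 0

/-- First Rayleigh quotient `λ₁(Γ_R)` of the mixed Dirichlet–Neumann Laplacian on `Γ_R`. -/
def lamR (R : ℝ) : ℝ :=
  sInf {r | ∃ u : ℝ × ℝ → ℝ, AdmR R u ∧ (∫ p in GamR R, (u p) ^ 2) ≠ 0 ∧
    r = (∫ p in GamR R, gradSq2 u p) / ∫ p in GamR R, (u p) ^ 2}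

/-- First Rayleigh quotient `λ₁(Γ)` of the Dirichlet Laplacian on the broken guide `Γ`. -/
def lamG : ℝ :=
  sInf {r | ∃ u : ℝ × ℝ → ℝ, ContDiff ℝ 1 u ∧ HasCompactSupport u ∧ tsupport u ⊆ Gam ∧
    (∫ p in Gam, (u p) ^ 2) ≠ 0 ∧
    r = (∫ p in Gam, gradSq2 u p) / ∫ p in Gam, (u p) ^ 2}

/-- `ω = √(π² − λ₁(Γ))`. -/
def omega : ℝ := Real.sqrt (π ^ 2 - lamG)

/-! ### Variational inequalities and mollification -/

lemma gradSq2_nonneg (u : ℝ × ℝ → ℝ) (p : ℝ × ℝ) : 0 ≤ gradSq2 u p := by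
  unfold gradSq2; positivity

lemma isOpen_Gam : IsOpen Gam := by
  have h : Continuous fun p : ℝ × ℝ => min p.1 p.2 := by fun_prop
  exact (isOpen_lt continuous_const h).inter (isOpen_lt h continuous_const)

lemma lamG_nonneg : 0 ≤ lamG := by
  refine Real.sInf_nonneg ?_
  rintro r ⟨u, -, -, -, -, rfl⟩
  exact div_nonneg (integral_nonneg fun p => gradSq2_nonneg u p)
    (integral_nonneg fun p => sq_nonneg _)

lemma lamR_nonneg (R : ℝ) : 0 ≤ lamR R := by
  refine Real.sInf_nonneg ?_
  rintro r ⟨u, -, -, rfl⟩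
  exact div_nonneg (integral_nonneg fun p => gradSq2_nonneg u p)
    (integral_nonneg fun p => sq_nonneg _)

/-- The variational inequality for `λ₁(Γ)`, valid also for `u` of zero `L²` norm. -/
lemma lamG_mul_le {u : ℝ × ℝ → ℝ} (hu : ContDiff ℝ 1 u) (hc : HasCompactSupport u)
    (hs : tsupport u ⊆ Gam) :
    lamG * ∫ p in Gam, (u p) ^ 2 ≤ ∫ p in Gam, gradSq2 u p := by
  have hD : 0 ≤ ∫ p in Gam, gradSq2 u p := integral_nonneg fun p => gradSq2_nonneg u p
  have hN : 0 ≤ ∫ p in Gam, (u p) ^ 2 := integral_nonneg fun p => sq_nonneg _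
  rcases hN.eq_or_lt with h | h
  · rw [← h, mul_zero]; exact hD
  · rw [← le_div_iff₀ h]
    refine csInf_le ⟨0, ?_⟩ ⟨u, hu, hc, hs, h.ne', rfl⟩
    rintro r ⟨u, -, -, -, -, rfl⟩
    exact div_nonneg (integral_nonneg fun p => gradSq2_nonneg u p)
      (integral_nonneg fun p => sq_nonneg _)

lemma lamR_mul_le {R : ℝ} {u : ℝ × ℝ → ℝ} (hu : AdmR R u) :
    lamR R * ∫ p in GamR R, (u p) ^ 2 ≤ ∫ p in GamR R, gradSq2 u p := by
  have hD : 0 ≤ ∫ p in GamR R, gradSq2 u p := integral_nonneg fun p => gradSq2_nonneg u p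
  have hN : 0 ≤ ∫ p in GamR R, (u p) ^ 2 := integral_nonneg fun p => sq_nonneg _
  rcases hN.eq_or_lt with h | h
  · rw [← h, mul_zero]; exact hD
  · rw [← le_div_iff₀ h]
    refine csInf_le ⟨0, ?_⟩ ⟨u, hu, h.ne', rfl⟩
    rintro r ⟨u, -, -, rfl⟩
    exact div_nonneg (integral_nonneg fun p => gradSq2_nonneg u p)
      (integral_nonneg fun p => sq_nonneg _)

lemma measurable_gradSq2 (u : ℝ × ℝ → ℝ) : Measurable (gradSq2 u) :=
  ((measurable_fderiv_apply_const ℝ u _).pow_const 2).add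
    ((measurable_fderiv_apply_const ℝ u _).pow_const 2)

/-- A bounded measurable function vanishing outside a compact set is integrable. -/
lemma integrable_of_bound {f : ℝ × ℝ → ℝ} {S : Set (ℝ × ℝ)} {C : ℝ} (hS : IsCompact S)
    (hf : Measurable f) (hb : ∀ p, |f p| ≤ C) (h0 : ∀ p ∉ S, f p = 0) : Integrable f := by
  have h1 : IntegrableOn f S :=
    Measure.integrableOn_of_bounded hS.measure_lt_top.ne hf.aestronglyMeasurable
      (Filter.Eventually.of_forall fun p => by simpa using hb p)
  exact (integrableOn_iff_integrable_of_support_subset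
    (fun p hp => by by_contra h; exact hp (h0 p h))).1 h1

lemma fderiv_apply_bound {g : ℝ × ℝ → ℝ} {K : NNReal} (hg : LipschitzWith K g) (p v : ℝ × ℝ) :
    |fderiv ℝ g p v| ≤ K * ‖v‖ := by
  have h1 := (fderiv ℝ g p).le_opNorm v
  have h2 := norm_fderiv_le_of_lipschitz ℝ hg (x₀ := p)
  rw [Real.norm_eq_abs] at h1
  exact h1.trans (by gcongr)

lemma fderiv_zero_of_notMem_tsupport {g : ℝ × ℝ → ℝ} {p : ℝ × ℝ} (hp : p ∉ tsupport g) :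
    fderiv ℝ g p = 0 := by
  have : g =ᶠ[nhds p] fun _ => 0 := by
    have := notMem_tsupport_iff_eventuallyEq.1 hp
    exact this
  rw [this.fderiv_eq]; simp

lemma integrable_fderiv_sq {g : ℝ × ℝ → ℝ} {K : NNReal} (hg : LipschitzWith K g)
    (hc : HasCompactSupport g) (v : ℝ × ℝ) : Integrable fun p => (fderiv ℝ g p v) ^ 2 := by
  refine integrable_of_bound (C := (K * ‖v‖) ^ 2) hc
    ((measurable_fderiv_apply_const ℝ g v).pow_const 2) (fun p => ?_) (fun p hp => ?_)
  · rw [abs_pow]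
    exact pow_le_pow_left₀ (abs_nonneg _) (fderiv_apply_bound hg p v) 2
  · simp [fderiv_zero_of_notMem_tsupport hp]

lemma integrable_gradSq2 {g : ℝ × ℝ → ℝ} {K : NNReal} (hg : LipschitzWith K g)
    (hc : HasCompactSupport g) : Integrable (gradSq2 g) :=
  (integrable_fderiv_sq hg hc _).add (integrable_fderiv_sq hg hc _)

open scoped Convolution
open ContinuousLinearMap (lsmul)

/-- Mollification does not increase the `L²` norm of a directional derivative. The derivative
of the mollified function is the average of the almost-everywhere derivative (Rademacher), and
the square of an average is at most the average of the squares. -/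
lemma mollify_dir {g : ℝ × ℝ → ℝ} {K : NNReal} (hg : LipschitzWith K g)
    (hc : HasCompactSupport g) (φ : ContDiffBump (0 : ℝ × ℝ)) (v : ℝ × ℝ) :
    Integrable (fun p => (fderiv ℝ (φ.normed volume ⋆[lsmul ℝ ℝ, volume] g) p v) ^ 2) ∧
    ∫ p, (fderiv ℝ (φ.normed volume ⋆[lsmul ℝ ℝ, volume] g) p v) ^ 2
      ≤ ∫ p, (fderiv ℝ g p v) ^ 2 := by
  set ψ := φ.normed (volume : Measure (ℝ × ℝ)) with hψ
  have hψ0 : ∀ t, 0 ≤ ψ t := fun t => φ.nonneg_normed t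
  have hψi : Integrable ψ := φ.integrable_normed
  have hψc : Continuous ψ := φ.continuous_normed
  have hψ1 : ∫ t, ψ t = 1 := φ.integral_normed
  have hD : ∀ x, HasFDerivAt (ψ ⋆[lsmul ℝ ℝ, volume] g)
      (∫ t, ψ t • fderiv ℝ g (x - t)) x := by
    intro x
    have hmeas : Measurable fun t => ψ t • fderiv ℝ g (x - t) :=
      hψc.measurable.smul ((measurable_fderiv ℝ g).comp (measurable_const.sub measurable_id))
    refine (hasFDerivAt_integral_of_dominated_loc_of_lip (bound := fun t => ψ t * K)
      (F := fun x t => ψ t • g (x - t)) (s := univ) Filter.univ_mem ?_ ?_ ?_ ?_ ?_ ?_).2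
    · refine Filter.Eventually.of_forall fun y => ?_
      exact (hψc.smul (hg.continuous.comp (by fun_prop))).aestronglyMeasurable
    · exact φ.hasCompactSupport_normed.convolutionExists_left (lsmul ℝ ℝ) hψc
        (hg.continuous.locallyIntegrable) x
    · exact hmeas.aestronglyMeasurable
    · refine Filter.Eventually.of_forall fun t => LipschitzWith.lipschitzOnWith ?_
      refine LipschitzWith.of_dist_le_mul fun a b => ?_
      have h := hg.dist_le_mul (a - t) (b - t)
      rw [dist_sub_right] at h
      simp only [dist_smul₀, Real.norm_eq_abs, abs_of_nonneg (hψ0 t), Real.coe_nnabs]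
      rw [abs_of_nonneg (mul_nonneg (hψ0 t) K.coe_nonneg), mul_assoc]
      exact mul_le_mul_of_nonneg_left h (hψ0 t)
    · exact hψi.mul_const _
    · have hae : ∀ᵐ y, DifferentiableAt ℝ g y := hg.ae_differentiableAt
      have hq : Measure.QuasiMeasurePreserving (fun t : ℝ × ℝ => x - t) volume volume :=
        (Measure.measurePreserving_sub_left volume x).quasiMeasurePreserving
      filter_upwards [hq.ae hae] with t ht
      have := ht.hasFDerivAt.comp x ((hasFDerivAt_id x).sub_const t)
      exact (this.const_smul (ψ t))
  have hbd : ∀ p, |fderiv ℝ g p v| ≤ K * ‖v‖ := fun p => fderiv_apply_bound hg p v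
  have hm : Measurable fun p => fderiv ℝ g p v := measurable_fderiv_apply_const ℝ g v
  have hI1 : ∀ x, Integrable fun t => ψ t * fderiv ℝ g (x - t) v := fun x =>
    hψi.mul_bdd (c := K * ‖v‖)
      ((hm.comp (measurable_const.sub measurable_id)).aestronglyMeasurable)
      (Filter.Eventually.of_forall fun t => hbd _)
  have hI2 : ∀ x, Integrable fun t => ψ t * (fderiv ℝ g (x - t) v) ^ 2 := fun x =>
    hψi.mul_bdd (c := (K * ‖v‖) ^ 2)
      (((hm.pow_const 2).comp (measurable_const.sub measurable_id)).aestronglyMeasurable)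
      (Filter.Eventually.of_forall fun t => by
        simp only [Real.norm_eq_abs, abs_pow]
        exact pow_le_pow_left₀ (abs_nonneg _) (hbd _) 2)
  have hDv : ∀ x, fderiv ℝ (ψ ⋆[lsmul ℝ ℝ, volume] g) x v =
      ∫ t, ψ t * fderiv ℝ g (x - t) v := by
    intro x
    rw [(hD x).fderiv, ContinuousLinearMap.integral_apply]
    · simp
    · have hmeas : Measurable fun t => ψ t • fderiv ℝ g (x - t) :=
        hψc.measurable.smul ((measurable_fderiv ℝ g).comp (measurable_const.sub measurable_id))
      refine (hψi.mul_const (K : ℝ)).mono' hmeas.aestronglyMeasurable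
        (Filter.Eventually.of_forall fun t => ?_)
      rw [norm_smul, Real.norm_eq_abs, abs_of_nonneg (hψ0 t)]
      exact mul_le_mul_of_nonneg_left (norm_fderiv_le_of_lipschitz ℝ hg) (hψ0 t)
  have hJ : ∀ x, (fderiv ℝ (ψ ⋆[lsmul ℝ ℝ, volume] g) x v) ^ 2 ≤
      (ψ ⋆[lsmul ℝ ℝ, volume] fun p => (fderiv ℝ g p v) ^ 2) x := by
    intro x
    have h0 : (0 : ℝ) ≤ ∫ t, ψ t * (fderiv ℝ g (x - t) v - ∫ t, ψ t * fderiv ℝ g (x - t) v) ^ 2 :=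
      integral_nonneg fun t => mul_nonneg (hψ0 t) (sq_nonneg _)
    rw [hDv x]
    set m := ∫ t, ψ t * fderiv ℝ g (x - t) v with hmdef
    have h1 : (∫ t, ψ t * (fderiv ℝ g (x - t) v - m) ^ 2) =
        ∫ t, (ψ t * (fderiv ℝ g (x - t) v) ^ 2 - (2 * m) * (ψ t * fderiv ℝ g (x - t) v))
          + m ^ 2 * ψ t := by
      congr 1; ext t; ring
    have hI3 : Integrable fun t => ψ t * (fderiv ℝ g (x - t) v) ^ 2 -
        (2 * m) * (ψ t * fderiv ℝ g (x - t) v) := (hI2 x).sub ((hI1 x).const_mul _)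
    rw [h1, integral_add hI3 (hψi.const_mul _),
      integral_sub (hI2 x) ((hI1 x).const_mul _), integral_const_mul, integral_const_mul, hψ1,
      ← hmdef] at h0
    have h2 : (ψ ⋆[lsmul ℝ ℝ, volume] fun p => (fderiv ℝ g p v) ^ 2) x =
      ∫ t, ψ t * (fderiv ℝ g (x - t) v) ^ 2 := rfl
    rw [h2]
    nlinarith
  have hgi := integrable_fderiv_sq hg hc v
  have hci : Integrable (ψ ⋆[lsmul ℝ ℝ, volume] fun p => (fderiv ℝ g p v) ^ 2) :=
    hψi.integrable_convolution (lsmul ℝ ℝ) hgi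
  have hfi : Integrable (fun p => (fderiv ℝ (ψ ⋆[lsmul ℝ ℝ, volume] g) p v) ^ 2) := by
    refine hci.mono' ((measurable_fderiv_apply_const ℝ _ v).pow_const 2).aestronglyMeasurable
      (Filter.Eventually.of_forall fun p => ?_)
    rw [Real.norm_eq_abs, abs_of_nonneg (sq_nonneg _)]
    exact hJ p
  refine ⟨hfi, (integral_mono hfi hci hJ).trans ?_⟩
  rw [integral_convolution (lsmul ℝ ℝ) hψi hgi, hψ1]
  simp

open scoped Convolution in
open ContinuousLinearMap (lsmul) in
/-- A Lipschitz function of compact support that vanishes off `Γ` is uniformly close to an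
admissible `C¹` function of no larger Dirichlet energy: soft truncation at height `ε / 2` moves
the support inside `Γ`, and a mollification at a small scale restores smoothness. -/
lemma exists_smooth_approx {w : ℝ × ℝ → ℝ} {K : NNReal} (hw : LipschitzWith K w)
    (hc : HasCompactSupport w) (h0 : ∀ p ∉ Gam, w p = 0) {ε : ℝ} (hε : 0 < ε) :
    ∃ z : ℝ × ℝ → ℝ, ContDiff ℝ 1 z ∧ HasCompactSupport z ∧ tsupport z ⊆ Gam ∧
      (∀ p, |z p - w p| ≤ ε) ∧ (∀ p, w p = 0 → z p = 0) ∧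
      ∫ p in Gam, gradSq2 z p ≤ ∫ p in Gam, gradSq2 w p := by
  set T : ℝ → ℝ := fun t => t - max (-(ε / 2)) (min t (ε / 2)) with hT
  have hT1 : ∀ a b, |T a - T b| ≤ |a - b| := by
    intro a b
    simp only [hT]
    rcases le_total a (ε / 2) with h1 | h1 <;> rcases le_total b (ε / 2) with h2 | h2 <;>
      rcases le_total (-(ε / 2)) a with h3 | h3 <;> rcases le_total (-(ε / 2)) b with h4 | h4 <;>
      simp only [min_eq_left, min_eq_right, max_eq_left, max_eq_right, h1, h2, h3, h4,
        show -(ε / 2) ≤ ε / 2 by linarith] <;>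
      rcases abs_cases (a - b) with ⟨h5, h5'⟩ | ⟨h5, h5'⟩ <;> rw [h5, abs_le] <;>
      constructor <;> linarith
  have hT2 : ∀ a, |T a - a| ≤ ε / 2 := by
    intro a
    simp only [hT]
    rw [abs_le]
    constructor
    · have : max (-(ε / 2)) (min a (ε / 2)) ≤ ε / 2 := max_le (by linarith) (min_le_right _ _)
      linarith
    · have : -(ε / 2) ≤ max (-(ε / 2)) (min a (ε / 2)) := le_max_left _ _
      linarith
  have hT3 : ∀ a, |a| ≤ ε / 2 → T a = 0 := by
    intro a ha
    rw [abs_le] at ha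
    simp only [hT, min_eq_left ha.2, max_eq_right ha.1, sub_self]
  set g : ℝ × ℝ → ℝ := fun p => T (w p) with hgdef
  have hgw : ∀ p q, |g p - g q| ≤ |w p - w q| := fun p q => hT1 _ _
  have hg : LipschitzWith K g := LipschitzWith.of_dist_le_mul fun p q => by
    rw [Real.dist_eq]
    refine (hgw p q).trans ?_
    rw [← Real.dist_eq]; exact hw.dist_le_mul p q
  set C : Set (ℝ × ℝ) := {p | ε / 2 ≤ |w p|} with hC
  have hCcl : IsClosed C := isClosed_le continuous_const hw.continuous.abs
  have hCU : C ⊆ Function.support w := fun p hp h => by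
    have : ε / 2 ≤ |w p| := hp
    rw [h, abs_zero] at this; linarith
  have hCc : IsCompact C := hc.of_isClosed_subset hCcl (hCU.trans subset_closure)
  have hUo : IsOpen (Function.support w) := hw.continuous.isOpen_support
  have hUG : Function.support w ⊆ Gam := fun p hp => by
    by_contra h; exact hp (h0 p h)
  have hsg : Function.support g ⊆ C := fun p hp => by
    by_contra h
    exact hp (hT3 _ (not_le.1 h).le)
  have htg : tsupport g ⊆ C := closure_minimal hsg hCcl
  have hgc : HasCompactSupport g := hCc.of_isClosed_subset (isClosed_tsupport g) htg
  obtain ⟨δ, hδ, hδU⟩ := hCc.exists_cthickening_subset_open hUo hCU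
  obtain ⟨d, hd0, hdδ, hdK⟩ : ∃ d, 0 < d ∧ d ≤ δ ∧ K * d ≤ ε / 2 := by
    refine ⟨min δ (ε / 2 / (K + 1)), lt_min hδ (by positivity), min_le_left _ _, ?_⟩
    calc (K : ℝ) * min δ (ε / 2 / (K + 1)) ≤ (K + 1) * (ε / 2 / (K + 1)) := by
          gcongr
          · linarith
          · exact min_le_right _ _
      _ = ε / 2 := by field_simp
  set φ : ContDiffBump (0 : ℝ × ℝ) := ⟨d / 2, d, by positivity, by linarith⟩ with hφ
  set z := (φ.normed volume ⋆[lsmul ℝ ℝ, volume] g) with hz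
  have hsz : Function.support z ⊆ Metric.cthickening δ C := by
    refine (support_convolution_subset (lsmul ℝ ℝ)).trans ?_
    rw [φ.support_normed_eq]
    rintro _ ⟨a, ha, b, hb, rfl⟩
    refine Metric.mem_cthickening_of_dist_le _ b _ _ (hsg hb) ?_
    have ha' : dist a 0 < d := ha
    simp only [dist_eq_norm, sub_zero] at ha' ⊢
    simp only [add_sub_cancel_right]
    linarith
  have htz : tsupport z ⊆ Metric.cthickening δ C :=
    closure_minimal hsz Metric.isClosed_cthickening
  have hzc : HasCompactSupport z := hCc.cthickening.of_isClosed_subset (isClosed_tsupport z) htz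
  have hd1 := mollify_dir hg hgc φ (1, 0)
  have hd2 := mollify_dir hg hgc φ (0, 1)
  refine ⟨z, ?_, hzc, htz.trans (hδU.trans hUG), fun p => ?_, fun p hp => ?_, ?_⟩
  · exact φ.hasCompactSupport_normed.contDiff_convolution_left (lsmul ℝ ℝ) φ.contDiff_normed
      hg.continuous.locallyIntegrable
  · have h1 : dist (z p) (g p) ≤ ε / 2 := by
      refine φ.dist_normed_convolution_le hg.continuous.aestronglyMeasurable fun x hx => ?_
      have hx' : dist x p < d := hx
      exact (hg.dist_le_mul x p).trans ((mul_le_mul_of_nonneg_left hx'.le K.coe_nonneg).trans hdK)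
    have h2 := hT2 (w p)
    rw [Real.dist_eq] at h1
    calc |z p - w p| = |(z p - g p) + (g p - w p)| := by ring_nf
      _ ≤ ε / 2 + ε / 2 := (abs_add_le _ _).trans (add_le_add h1 h2)
      _ = ε := by ring
  · by_contra h
    exact hδU (hsz h) hp
  · have hzi : Integrable (gradSq2 z) := hd1.1.add hd2.1
    calc ∫ p in Gam, gradSq2 z p ≤ ∫ p, gradSq2 z p :=
          setIntegral_le_integral hzi (Filter.Eventually.of_forall (gradSq2_nonneg z))
      _ ≤ ∫ p, gradSq2 g p := by
          unfold gradSq2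
          rw [integral_add hd1.1 hd2.1, integral_add (integrable_fderiv_sq hg hgc _)
            (integrable_fderiv_sq hg hgc _)]
          exact add_le_add hd1.2 hd2.2
      _ = ∫ p in Gam, gradSq2 g p := by
          refine (setIntegral_eq_integral_of_forall_compl_eq_zero fun p hp => ?_).symm
          have : p ∉ tsupport g := fun h => hp (hUG (hCU (htg h)))
          simp [gradSq2, fderiv_zero_of_notMem_tsupport this]
      _ ≤ ∫ p in Gam, gradSq2 w p := by
          refine integral_mono_ae (integrable_gradSq2 hg hgc).integrableOn
            (integrable_gradSq2 hw hc).integrableOn (ae_restrict_of_ae ?_)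
          filter_upwards [hw.ae_differentiableAt, hg.ae_differentiableAt] with p hp hq
          -- `|g(p+tv) - g(p)| ≤ |w(p+tv) - w(p)|` passes to the difference quotients.
          have key : ∀ v, (fderiv ℝ g p v) ^ 2 ≤ (fderiv ℝ w p v) ^ 2 := by
            intro v
            have l1 := (hq.hasFDerivAt.hasLineDerivAt v).tendsto_slope_zero
            have l2 := (hp.hasFDerivAt.hasLineDerivAt v).tendsto_slope_zero
            rw [sq_le_sq]
            refine le_of_tendsto_of_tendsto' l1.abs l2.abs fun t => ?_
            simp only [smul_eq_mul, abs_mul]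
            exact mul_le_mul_of_nonneg_left (hgw _ _) (abs_nonneg _)
          exact add_le_add (key _) (key _)

lemma integrable_sq {w : ℝ × ℝ → ℝ} (hw : Continuous w) (hc : HasCompactSupport w) :
    Integrable fun p => (w p) ^ 2 :=
  (hw.pow 2).integrable_of_hasCompactSupport (hc.mono fun p hp h => hp (by simp [h]))

/-- The variational inequality for `λ₁(Γ)` extends to Lipschitz functions of compact support
vanishing off `Γ`. -/
lemma lamG_mul_le_lip {w : ℝ × ℝ → ℝ} {K : NNReal} (hw : LipschitzWith K w)
    (hc : HasCompactSupport w) (h0 : ∀ p ∉ Gam, w p = 0) :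
    lamG * ∫ p in Gam, (w p) ^ 2 ≤ ∫ p in Gam, gradSq2 w p := by
  have hpos : ∀ n : ℕ, (0 : ℝ) < 1 / ((n : ℝ) + 1) := fun n => Nat.one_div_pos_of_nat
  choose z hz1 hz2 hz3 hz4 hz5 hz6 using fun n : ℕ =>
    exists_smooth_approx hw hc h0 (hpos n)
  have hlim : Filter.Tendsto (fun n => lamG * ∫ p in Gam, (z n p) ^ 2) Filter.atTop
      (nhds (lamG * ∫ p in Gam, (w p) ^ 2)) := by
    refine Filter.Tendsto.const_mul _ ?_
    refine tendsto_integral_of_dominated_convergence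
      (fun p => (tsupport w).indicator (fun p => (|w p| + 1) ^ 2) p) (fun n => ?_) ?_ (fun n => ?_) ?_
    · exact ((hz1 n).continuous.pow 2).aestronglyMeasurable
    · refine Integrable.integrableOn ?_
      rw [integrable_indicator_iff (isClosed_tsupport w).measurableSet]
      have hcw := hw.continuous
      exact Continuous.continuousOn (by fun_prop) |>.integrableOn_compact hc
    · refine Filter.Eventually.of_forall fun p => ?_
      by_cases hp : w p = 0
      · rw [hz5 n p hp]
        simp only [ne_eq, OfNat.ofNat_ne_zero, not_false_eq_true, zero_pow, norm_zero]
        exact indicator_nonneg (fun _ _ => sq_nonneg _) _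
      · rw [indicator_of_mem (subset_tsupport w hp), norm_pow, Real.norm_eq_abs]
        refine pow_le_pow_left₀ (abs_nonneg _) ?_ 2
        have h1 := hz4 n p
        have h2 : 1 / ((n : ℝ) + 1) ≤ 1 := by
          rw [div_le_one (by positivity)]; linarith [(Nat.cast_nonneg n : (0 : ℝ) ≤ n)]
        have h3 := abs_sub_abs_le_abs_sub (z n p) (w p)
        linarith
    · refine Filter.Eventually.of_forall fun p => Filter.Tendsto.pow ?_ 2
      rw [tendsto_iff_norm_sub_tendsto_zero]
      exact squeeze_zero (fun n => norm_nonneg _) (fun n => hz4 n p)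
        tendsto_one_div_add_atTop_nhds_zero_nat
  exact le_of_tendsto' hlim fun n => (lamG_mul_le (hz1 n) (hz2 n) (hz3 n)).trans (hz6 n)

/-! ### The threshold inequality λ₁(Γ) < π² -/

lemma lipschitz_mul_of_bound {X : Type*} [PseudoMetricSpace X] {f g : X → ℝ} {Kf Kg A B : NNReal}
    (hf : LipschitzWith Kf f) (hg : LipschitzWith Kg g) (hA : ∀ x, |f x| ≤ A)
    (hB : ∀ x, |g x| ≤ B) : LipschitzWith (A * Kg + B * Kf) fun x => f x * g x := by
  refine LipschitzWith.of_dist_le_mul fun x y => ?_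
  have h1 := hf.dist_le_mul x y
  have h2 := hg.dist_le_mul x y
  rw [Real.dist_eq] at *
  have e : f x * g x - f y * g y = f x * (g x - g y) + g y * (f x - f y) := by ring
  rw [e]
  refine (abs_add_le _ _).trans ?_
  rw [abs_mul, abs_mul]
  push_cast
  have h3 := mul_le_mul (hA x) h2 (abs_nonneg _) A.coe_nonneg
  have h4 := mul_le_mul (hB y) h1 (abs_nonneg _) B.coe_nonneg
  linarith

/-- The transverse ground state `-sin (π t)` on `[-1, 0]`, extended by zero. -/
def trS (t : ℝ) : ℝ := -Real.sin (π * max (-1) (min t 0))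

/-- The tent function rising from `-1` to `0` and decreasing from `0` to `2`. -/
def trG (t : ℝ) : ℝ := max 0 (min (1 + t) (1 - t / 2))

/-- The almost-everywhere derivative of `trS`. -/
def trS' (t : ℝ) : ℝ := (Ioo (-1 : ℝ) 0).indicator (fun t => -(π * Real.cos (π * t))) t

/-- The almost-everywhere derivative of `trG`. -/
def trG' (t : ℝ) : ℝ :=
  (Ioo (-1 : ℝ) 0).indicator (fun _ => 1) t + (Ioo (0 : ℝ) 2).indicator (fun _ => -(1 / 2)) t

lemma trS_of_mem {t : ℝ} (h : t ∈ Icc (-1 : ℝ) 0) : trS t = -Real.sin (π * t) := by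
  rw [trS, min_eq_left h.2, max_eq_right h.1]

lemma trS_of_le {t : ℝ} (h : t ≤ -1) : trS t = 0 := by
  rw [trS, min_eq_left (by linarith), max_eq_left h]; simp

lemma trS_of_ge {t : ℝ} (h : 0 ≤ t) : trS t = 0 := by
  rw [trS, min_eq_right h]; simp

lemma trG_of_mem {t : ℝ} (h : t ∈ Icc (-1 : ℝ) 0) : trG t = 1 + t := by
  rw [trG, min_eq_left (by linarith [h.2]), max_eq_right (by linarith [h.1])]

lemma trG_of_mem' {t : ℝ} (h : t ∈ Icc (0 : ℝ) 2) : trG t = 1 - t / 2 := by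
  rw [trG, min_eq_right (by linarith [h.1]), max_eq_right (by linarith [h.2])]

lemma trG_of_le {t : ℝ} (h : t ≤ -1) : trG t = 0 := by
  rw [trG, min_eq_left (by linarith), max_eq_left (by linarith)]

lemma trG_of_ge {t : ℝ} (h : 2 ≤ t) : trG t = 0 := by
  rw [trG, min_eq_right (by linarith), max_eq_left (by linarith)]

lemma trS_cont : Continuous trS := by unfold trS; fun_prop

lemma trG_cont : Continuous trG := by unfold trG; fun_prop

lemma trS_abs (t : ℝ) : |trS t| ≤ (1 : NNReal) := by
  rw [trS, abs_neg]; simpa using Real.abs_sin_le_one _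

lemma trG_abs (t : ℝ) : |trG t| ≤ (1 : NNReal) := by
  rw [trG, abs_of_nonneg (le_max_left _ _)]
  simp only [NNReal.coe_one]
  refine max_le (by norm_num) ?_
  rcases le_total t 0 with h | h
  · exact (min_le_left _ _).trans (by linarith)
  · exact (min_le_right _ _).trans (by linarith)

lemma trS_lip : ∃ K, LipschitzWith K trS := by
  have h1 : LipschitzWith 1 Real.sin := Real.lipschitzWith_sin
  have h2 : LipschitzWith _ fun t : ℝ => π * max (-1) (min t 0) :=
    (lipschitzWith_smul π).comp ((LipschitzWith.id.min_const 0).const_max (-1))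
  exact ⟨_, (h1.comp h2).neg⟩

lemma trG_lip : ∃ K, LipschitzWith K trG := by
  have h1 : LipschitzWith 1 fun t : ℝ => 1 + t :=
    LipschitzWith.of_dist_le_mul fun x y => by simp
  have h2 : LipschitzWith 1 fun t : ℝ => 1 - t / 2 :=
    LipschitzWith.of_dist_le_mul fun x y => by
      simp only [Real.dist_eq, NNReal.coe_one, one_mul]
      rw [show 1 - x / 2 - (1 - y / 2) = -((x - y) / 2) by ring, abs_neg, abs_div]
      simp only [Nat.abs_ofNat]
      linarith [abs_nonneg (x - y)]
  exact ⟨_, (h1.min h2).const_max 0⟩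

lemma ae_deriv_trial : ∀ᵐ t : ℝ, HasDerivAt trS (trS' t) t ∧ HasDerivAt trG (trG' t) t := by
  have hnull : ∀ c : ℝ, ∀ᵐ t : ℝ, t ≠ c := fun c => by
    simp [ae_iff]
  filter_upwards [hnull (-1), hnull 0, hnull 2] with t h1 h2 h3
  rcases lt_or_gt_of_ne h1 with h1 | h1
  · have e1 : trS' t = 0 := by simp [trS', not_lt.2 h1.le]
    have e2 : trG' t = 0 := by
      simp [trG', not_lt.2 h1.le, not_lt.2 (show t ≤ 0 by linarith)]
    rw [e1, e2]
    have hn := Iio_mem_nhds h1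
    constructor
    · refine (hasDerivAt_const t (0 : ℝ)).congr_of_eventuallyEq ?_
      filter_upwards [hn] with y hy using trS_of_le (le_of_lt hy)
    · refine (hasDerivAt_const t (0 : ℝ)).congr_of_eventuallyEq ?_
      filter_upwards [hn] with y hy using trG_of_le (le_of_lt hy)
  rcases lt_or_gt_of_ne h2 with h2 | h2
  · have hm : t ∈ Ioo (-1 : ℝ) 0 := ⟨h1, h2⟩
    have e1 : trS' t = -(π * Real.cos (π * t)) := by simp [trS', h1, h2]
    have e2 : trG' t = 1 := by simp [trG', h1, h2, not_lt.2 h2.le]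
    rw [e1, e2]
    have hn := Ioo_mem_nhds h1 h2
    constructor
    · have : HasDerivAt (fun t => -Real.sin (π * t)) (-(π * Real.cos (π * t))) t := by
        have hi : HasDerivAt (fun t : ℝ => π * t) π t := by
          simpa using (hasDerivAt_id t).const_mul π
        exact hi.sin.neg.congr_deriv (by ring)
      refine this.congr_of_eventuallyEq ?_
      filter_upwards [hn] with y hy using trS_of_mem (Ioo_subset_Icc_self hy)
    · refine ((hasDerivAt_id t).const_add 1).congr_of_eventuallyEq ?_
      filter_upwards [hn] with y hy using trG_of_mem (Ioo_subset_Icc_self hy)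
  have e1 : trS' t = 0 := by simp [trS', not_lt.2 (show 0 ≤ t from h2.le)]
  rw [e1]
  refine ⟨?_, ?_⟩
  · refine (hasDerivAt_const t (0 : ℝ)).congr_of_eventuallyEq ?_
    filter_upwards [Ioi_mem_nhds h2] with y hy using trS_of_ge (le_of_lt hy)
  rcases lt_or_gt_of_ne h3 with h3 | h3
  · have e2 : trG' t = -(1 / 2) := by
      simp [trG', h3, not_lt.2 (show 0 ≤ t from h2.le), show 0 < t from h2]
    rw [e2]
    have : HasDerivAt (fun t : ℝ => 1 - t / 2) (-(1 / 2)) t :=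
      ((hasDerivAt_id t).div_const 2).const_sub 1
    refine this.congr_of_eventuallyEq ?_
    filter_upwards [Ioo_mem_nhds h2 h3] with y hy using trG_of_mem' (Ioo_subset_Icc_self hy)
  · have e2 : trG' t = 0 := by
      simp [trG', not_lt.2 (show 0 ≤ t from h2.le), not_lt.2 (show 2 ≤ t from h3.le)]
    rw [e2]
    refine (hasDerivAt_const t (0 : ℝ)).congr_of_eventuallyEq ?_
    filter_upwards [Ioi_mem_nhds h3] with y hy using trG_of_ge (le_of_lt hy)

/-- Integrability and integral of a function equal to a continuous one on an open interval and
to zero elsewhere, from an antiderivative. -/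
lemma integral_of_antideriv {f h F : ℝ → ℝ} {a b I : ℝ} (hab : a ≤ b) (hcont : Continuous h)
    (hf : f = (Ioo a b).indicator h) (hF : ∀ t, HasDerivAt F (h t) t) (hI : F b - F a = I) :
    Integrable f ∧ ∫ t, f t = I := by
  subst hf
  constructor
  · rw [integrable_indicator_iff measurableSet_Ioo]
    exact (hcont.continuousOn.integrableOn_Icc).mono_set Ioo_subset_Icc_self
  · rw [integral_indicator measurableSet_Ioo, ← integral_Ioc_eq_integral_Ioo,
      ← intervalIntegral.integral_of_le hab,
      intervalIntegral.integral_eq_sub_of_hasDerivAt (fun t _ => hF t)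
        (hcont.intervalIntegrable _ _), hI]

lemma trial_SS : Integrable (fun t => trS t ^ 2) ∧ ∫ t, trS t ^ 2 = 1 / 2 := by
  refine integral_of_antideriv (a := -1) (b := 0) (h := fun t => Real.sin (π * t) ^ 2)
    (F := fun t => t / 2 - Real.sin (π * t) * Real.cos (π * t) / (2 * π)) (by norm_num)
    (by fun_prop) ?_ (fun t => ?_) ?_
  · ext t
    by_cases h : t ∈ Ioo (-1 : ℝ) 0
    · rw [indicator_of_mem h, trS_of_mem (Ioo_subset_Icc_self h)]; ring
    · rw [indicator_of_notMem h]
      rcases le_or_gt t (-1) with h1 | h1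
      · simp [trS_of_le h1]
      · have : 0 ≤ t := not_lt.1 fun h2 => h ⟨h1, h2⟩
        simp [trS_of_ge this]
  · have hi : HasDerivAt (fun t : ℝ => π * t) π t := by
      simpa using (hasDerivAt_id t).const_mul π
    have := ((hasDerivAt_id t).div_const 2).sub ((hi.sin.mul hi.cos).div_const (2 * π))
    refine this.congr_deriv ?_
    have hp : π ≠ 0 := pi_ne_zero
    have hsc := Real.sin_sq_add_cos_sq (π * t)
    field_simp
    linear_combination -hsc
  · simp; norm_num

lemma trial_SG : Integrable (fun t => trS t * trG t) ∧ ∫ t, trS t * trG t = 1 / π := by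
  refine integral_of_antideriv (a := -1) (b := 0) (h := fun t => -Real.sin (π * t) * (1 + t))
    (F := fun t => (1 + t) * Real.cos (π * t) / π - Real.sin (π * t) / (π * π)) (by norm_num)
    (by fun_prop) ?_ (fun t => ?_) ?_
  · ext t
    by_cases h : t ∈ Ioo (-1 : ℝ) 0
    · rw [indicator_of_mem h, trS_of_mem (Ioo_subset_Icc_self h),
        trG_of_mem (Ioo_subset_Icc_self h)]
    · rw [indicator_of_notMem h]
      rcases le_or_gt t (-1) with h1 | h1
      · simp [trS_of_le h1]
      · have : 0 ≤ t := not_lt.1 fun h2 => h ⟨h1, h2⟩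
        simp [trS_of_ge this]
  · have hi : HasDerivAt (fun t : ℝ => π * t) π t := by
      simpa using (hasDerivAt_id t).const_mul π
    have := ((((hasDerivAt_id t).const_add 1).mul hi.cos).div_const π).sub
      (hi.sin.div_const (π * π))
    refine this.congr_deriv ?_
    have hp : π ≠ 0 := pi_ne_zero
    simp only [id]
    field_simp
    ring
  · simp

lemma trial_dSdS : Integrable (fun t => trS' t ^ 2) ∧ ∫ t, trS' t ^ 2 = π ^ 2 / 2 := by
  refine integral_of_antideriv (a := -1) (b := 0) (h := fun t => (π * Real.cos (π * t)) ^ 2)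
    (F := fun t => π ^ 2 * (t / 2 + Real.sin (π * t) * Real.cos (π * t) / (2 * π))) (by norm_num)
    (by fun_prop) ?_ (fun t => ?_) ?_
  · ext t
    by_cases h : t ∈ Ioo (-1 : ℝ) 0
    · rw [indicator_of_mem h, trS', indicator_of_mem h]; ring
    · rw [indicator_of_notMem h, trS', indicator_of_notMem h]; simp
  · have hi : HasDerivAt (fun t : ℝ => π * t) π t := by
      simpa using (hasDerivAt_id t).const_mul π
    have := (((hasDerivAt_id t).div_const 2).add
      ((hi.sin.mul hi.cos).div_const (2 * π))).const_mul (π ^ 2)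
    refine this.congr_deriv ?_
    have hp : π ≠ 0 := pi_ne_zero
    have hsc := Real.sin_sq_add_cos_sq (π * t)
    field_simp
    linear_combination -hsc
  · simp; ring

lemma trial_dSdG : Integrable (fun t => trS' t * trG' t) ∧ ∫ t, trS' t * trG' t = 0 := by
  refine integral_of_antideriv (a := -1) (b := 0) (h := fun t => -(π * Real.cos (π * t)))
    (F := fun t => -Real.sin (π * t)) (by norm_num)
    (by fun_prop) ?_ (fun t => ?_) ?_
  · ext t
    by_cases h : t ∈ Ioo (-1 : ℝ) 0
    · have h2 : t ∉ Ioo (0 : ℝ) 2 := fun h' => by linarith [h.2, h'.1]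
      rw [indicator_of_mem h, trS', indicator_of_mem h, trG', indicator_of_mem h,
        indicator_of_notMem h2]
      ring
    · rw [indicator_of_notMem h, trS', indicator_of_notMem h]; simp
  · have hi : HasDerivAt (fun t : ℝ => π * t) π t := by
      simpa using (hasDerivAt_id t).const_mul π
    exact hi.sin.neg.congr_deriv (by ring)
  · simp

lemma trial_dGdG : Integrable (fun t => trG' t ^ 2) ∧ ∫ t, trG' t ^ 2 = 3 / 2 := by
  have h1 := integral_of_antideriv (f := (Ioo (-1 : ℝ) 0).indicator fun _ => 1) (a := -1) (b := 0)
    (I := 1) (h := fun _ => 1) (F := fun t => t) (by norm_num) (by fun_prop) rfl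
    (fun t => hasDerivAt_id t) (by norm_num)
  have h2 := integral_of_antideriv (f := (Ioo (0 : ℝ) 2).indicator fun _ => 1 / 4) (a := 0)
    (b := 2) (I := 1 / 2) (h := fun _ => 1 / 4) (F := fun t => t * (1 / 4)) (by norm_num)
    (by fun_prop) rfl (fun t => by simpa using (hasDerivAt_id t).mul_const (1 / 4 : ℝ))
    (by norm_num)
  have e : (fun t => trG' t ^ 2) = fun t => (Ioo (-1 : ℝ) 0).indicator (fun _ => (1 : ℝ)) t +
      (Ioo (0 : ℝ) 2).indicator (fun _ => (1 / 4 : ℝ)) t := by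
    ext t
    by_cases h : t ∈ Ioo (-1 : ℝ) 0
    · have h' : t ∉ Ioo (0 : ℝ) 2 := fun h' => by linarith [h.2, h'.1]
      simp only [trG', indicator_of_mem h, indicator_of_notMem h']; norm_num
    · by_cases h' : t ∈ Ioo (0 : ℝ) 2
      · simp only [trG', indicator_of_mem h', indicator_of_notMem h]; norm_num
      · simp only [trG', indicator_of_notMem h', indicator_of_notMem h]; norm_num
  rw [e]
  refine ⟨h1.1.add h2.1, ?_⟩
  rw [integral_add h1.1 h2.1, h1.2, h2.2]; norm_num

lemma trG_sq_integrable : Integrable fun t => trG t ^ 2 := by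
  refine (trG_cont.pow 2).integrable_of_hasCompactSupport
    (HasCompactSupport.intro (isCompact_Icc (a := (-1 : ℝ)) (b := 2)) fun t ht => ?_)
  rcases le_or_gt t (-1) with h | h
  · simp [trG_of_le h]
  · have : 2 ≤ t := le_of_lt (not_le.1 fun h2 => ht ⟨h.le, h2⟩)
    simp [trG_of_ge this]

lemma integral_two_products {a b c d : ℝ → ℝ} (haa : Integrable fun t => a t ^ 2)
    (hcc : Integrable fun t => c t ^ 2) (hac : Integrable fun t => a t * c t)
    (hbb : Integrable fun t => b t ^ 2) (hdd : Integrable fun t => d t ^ 2)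
    (hbd : Integrable fun t => b t * d t) :
    Integrable (fun p : ℝ × ℝ => (a p.1 * b p.2 + c p.1 * d p.2) ^ 2) ∧
    ∫ p : ℝ × ℝ, (a p.1 * b p.2 + c p.1 * d p.2) ^ 2 =
      (∫ t, a t ^ 2) * (∫ t, b t ^ 2) + 2 * ((∫ t, a t * c t) * ∫ t, b t * d t) +
        (∫ t, c t ^ 2) * ∫ t, d t ^ 2 := by
  have i1 : Integrable fun p : ℝ × ℝ => a p.1 ^ 2 * b p.2 ^ 2 := haa.mul_prod hbb
  have i2 : Integrable fun p : ℝ × ℝ => (a p.1 * c p.1) * (b p.2 * d p.2) := hac.mul_prod hbd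
  have i3 : Integrable fun p : ℝ × ℝ => c p.1 ^ 2 * d p.2 ^ 2 := hcc.mul_prod hdd
  have e : (fun p : ℝ × ℝ => (a p.1 * b p.2 + c p.1 * d p.2) ^ 2) = fun p =>
      (a p.1 ^ 2 * b p.2 ^ 2 + 2 * ((a p.1 * c p.1) * (b p.2 * d p.2))) +
        c p.1 ^ 2 * d p.2 ^ 2 := by
    ext p; ring
  have i4 : Integrable fun p : ℝ × ℝ =>
      a p.1 ^ 2 * b p.2 ^ 2 + 2 * ((a p.1 * c p.1) * (b p.2 * d p.2)) := i1.add (i2.const_mul 2)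
  rw [e]
  refine ⟨i4.add i3, ?_⟩
  rw [integral_add i4 i3, integral_add i1 (i2.const_mul 2), integral_const_mul]
  have e1 := integral_prod_mul (μ := volume) (ν := volume) (fun t => a t ^ 2) (fun t => b t ^ 2)
  have e2 := integral_prod_mul (μ := volume) (ν := volume) (fun t => a t * c t)
    (fun t => b t * d t)
  have e3 := integral_prod_mul (μ := volume) (ν := volume) (fun t => c t ^ 2) (fun t => d t ^ 2)
  rw [← e1, ← e2, ← e3]
  rfl

/-- The bend creates bound states: `λ₁(Γ) < π²`. The trial function is
`s(x₂) g(x₁) + s(x₁) g(x₂)`, with `s` the transverse ground state and `g` a tent. -/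
lemma lamG_lt : lamG < π ^ 2 := by
  set w : ℝ × ℝ → ℝ := fun p => trS p.1 * trG p.2 + trG p.1 * trS p.2 with hw
  obtain ⟨Ks, hs⟩ := trS_lip
  obtain ⟨Kg, hg⟩ := trG_lip
  have hlip : ∃ K, LipschitzWith K w :=
    ⟨_, (lipschitz_mul_of_bound (hs.comp LipschitzWith.prod_fst) (hg.comp LipschitzWith.prod_snd)
      (fun p => trS_abs _) (fun p => trG_abs _)).add
      (lipschitz_mul_of_bound (hg.comp LipschitzWith.prod_fst) (hs.comp LipschitzWith.prod_snd)
      (fun p => trG_abs _) (fun p => trS_abs _))⟩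
  obtain ⟨K, hK⟩ := hlip
  have h0 : ∀ p ∉ Gam, w p = 0 := by
    intro p hp
    simp only [hw]
    simp only [Gam, mem_ofPred_eq, lt_min_iff, min_lt_iff, not_and_or, not_or, not_lt] at hp
    rcases hp with (h | h) | ⟨h1, h2⟩
    · simp [trS_of_le h, trG_of_le h]
    · simp [trS_of_le h, trG_of_le h]
    · simp [trS_of_ge h1, trS_of_ge h2]
  have hc : HasCompactSupport w := by
    refine HasCompactSupport.intro (K := Icc (-1) 2 ×ˢ Icc (-1) 2)
      (isCompact_Icc.prod isCompact_Icc) fun p hp => ?_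
    simp only [hw]
    simp only [mem_prod, mem_Icc, not_and_or, not_le] at hp
    rcases hp with (h | h) | (h | h)
    · simp [trS_of_le h.le, trG_of_le h.le]
    · simp [trS_of_ge (show 0 ≤ p.1 by linarith), trG_of_ge h.le]
    · simp [trS_of_le h.le, trG_of_le h.le]
    · simp [trS_of_ge (show 0 ≤ p.2 by linarith), trG_of_ge h.le]
  have key := lamG_mul_le_lip hK hc h0
  have hae : ∀ᵐ p : ℝ × ℝ, gradSq2 w p =
      (trS' p.1 * trG p.2 + trG' p.1 * trS p.2) ^ 2 +
      (trS p.1 * trG' p.2 + trG p.1 * trS' p.2) ^ 2 := by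
    have q1 := (Measure.quasiMeasurePreserving_fst (μ := (volume : Measure ℝ))
      (ν := (volume : Measure ℝ))).ae ae_deriv_trial
    have q2 := (Measure.quasiMeasurePreserving_snd (μ := (volume : Measure ℝ))
      (ν := (volume : Measure ℝ))).ae ae_deriv_trial
    filter_upwards [q1, q2] with p h1 h2
    have f1 : HasFDerivAt (Prod.fst : ℝ × ℝ → ℝ) (ContinuousLinearMap.fst ℝ ℝ ℝ) p :=
      hasFDerivAt_fst
    have f2 : HasFDerivAt (Prod.snd : ℝ × ℝ → ℝ) (ContinuousLinearMap.snd ℝ ℝ ℝ) p :=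
      hasFDerivAt_snd
    have s1 := h1.1.comp_hasFDerivAt p f1
    have g1 := h1.2.comp_hasFDerivAt p f1
    have s2 := h2.1.comp_hasFDerivAt p f2
    have g2 := h2.2.comp_hasFDerivAt p f2
    have hf : HasFDerivAt w _ p := (s1.mul g2).add (g1.mul s2)
    rw [gradSq2, hf.fderiv]
    simp
    ring
  have j1 := integral_two_products trial_dSdS.1 trial_dGdG.1 trial_dSdG.1 trG_sq_integrable
    trial_SS.1 (by simpa only [mul_comm] using trial_SG.1)
  have j2 := integral_two_products trial_SS.1 trG_sq_integrable trial_SG.1 trial_dGdG.1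
    trial_dSdS.1 (by simpa only [mul_comm] using trial_dSdG.1)
  have j3 := integral_two_products trial_SS.1 trG_sq_integrable trial_SG.1 trG_sq_integrable
    trial_SS.1 (by simpa only [mul_comm] using trial_SG.1)
  have eN : ∫ p in Gam, (w p) ^ 2 = ∫ p, (w p) ^ 2 :=
    setIntegral_eq_integral_of_forall_compl_eq_zero fun p hp => by simp [h0 p hp]
  have eD : ∫ p in Gam, gradSq2 w p ≤ ∫ p, gradSq2 w p :=
    setIntegral_le_integral (integrable_gradSq2 hK hc)
      (Filter.Eventually.of_forall (gradSq2_nonneg w))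
  rw [integral_congr_ae hae, integral_add j1.1 j2.1, j1.2, j2.2] at eD
  rw [eN, j3.2] at key
  have c1 : ∫ t, trG t * trS t = 1 / π := by
    simpa only [mul_comm] using trial_SG.2
  have c2 : ∫ t, trG' t * trS' t = 0 := by
    simpa only [mul_comm] using trial_dSdG.2
  rw [c1] at key eD
  rw [c2] at eD
  rw [trial_SS.2, trial_SG.2] at key
  rw [trial_SS.2, trial_SG.2, trial_dSdS.2, trial_dSdG.2, trial_dGdG.2] at eD
  by_contra hcon
  rw [not_lt] at hcon
  have hG : 0 ≤ ∫ t, trG t ^ 2 := integral_nonneg fun t => sq_nonneg _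
  set G := ∫ t, trG t ^ 2
  have hp2 : π ^ 2 * (1 / π * (1 / π)) = 1 := by
    have hp : π ≠ 0 := pi_ne_zero
    field_simp
  have hN : 0 ≤ 1 / 2 * G + 2 * (1 / π * (1 / π)) + G * (1 / 2) := by positivity
  have := mul_le_mul_of_nonneg_right hcon hN
  nlinarith

/-! ### Poincaré's inequality and bracketing -/

/-- If `φ` dominates the exact derivative `(q f²)'`, its integral is at least the boundary
increment of `q f²`. All one-dimensional inequalities below follow from this by a choice of `q`. -/
lemma riccati {f f' q q' φ : ℝ → ℝ} {a b : ℝ} (hab : a ≤ b)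
    (hf : ∀ t ∈ Icc a b, HasDerivAt f (f' t) t) (hq : ∀ t ∈ Icc a b, HasDerivAt q (q' t) t)
    (hφ : ContinuousOn φ (Icc a b))
    (h : ∀ t ∈ Ioo a b, q' t * f t ^ 2 + q t * (2 * f t * f' t) ≤ φ t) :
    q b * f b ^ 2 - q a * f a ^ 2 ≤ ∫ t in a..b, φ t := by
  have hd : ∀ t ∈ Icc a b, HasDerivAt (fun t => q t * f t ^ 2)
      (q' t * f t ^ 2 + q t * (2 * f t * f' t)) t := fun t ht => by
    have := (hq t ht).mul ((hf t ht).pow 2)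
    refine this.congr_deriv ?_
    simp
  exact intervalIntegral.sub_le_integral_of_hasDeriv_right_of_le hab
    (fun t ht => (hd t ht).continuousAt.continuousWithinAt)
    (fun t ht => (hd t (Ioo_subset_Icc_self ht)).hasDerivWithinAt)
    hφ.integrableOn_Icc h

/-- Poincaré's inequality on `(-1, 0)` with the sharp constant `π²`. For `κ < π` the function
`q(t) = -κ tan (κ (t + 1/2))` is smooth on `[-1, 0]` and solves the Riccati equation
`q' + q² + κ² = 0`, so `f'² - κ² f² - (q f²)' = (f' - q f)² ≥ 0`; then `κ → π`. -/
lemma poincare_1d {f f' : ℝ → ℝ} (hf : ∀ t, HasDerivAt f (f' t) t) (hc : Continuous f')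
    (h0 : f (-1) = 0) (h1 : f 0 = 0) :
    0 ≤ ∫ t in (-1 : ℝ)..0, (f' t ^ 2 - π ^ 2 * f t ^ 2) := by
  have hfc : Continuous f := continuous_iff_continuousAt.2 fun t => (hf t).continuousAt
  have key : ∀ κ ∈ Ioo 0 π, 0 ≤ (∫ t in (-1 : ℝ)..0, f' t ^ 2) -
      κ ^ 2 * ∫ t in (-1 : ℝ)..0, f t ^ 2 := by
    intro κ hκ
    have hcos : ∀ t ∈ Icc (-1 : ℝ) 0, Real.cos (κ * (t + 1 / 2)) ≠ 0 := by
      intro t ht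
      refine (Real.cos_pos_of_mem_Ioo ⟨?_, ?_⟩).ne'
      · nlinarith [ht.1, ht.2, hκ.1, hκ.2]
      · nlinarith [ht.1, ht.2, hκ.1, hκ.2]
    have := riccati (f := f) (f' := f') (q := fun t => -(κ * Real.tan (κ * (t + 1 / 2))))
      (q' := fun t => -(κ * (1 / Real.cos (κ * (t + 1 / 2)) ^ 2 * κ)))
      (φ := fun t => f' t ^ 2 - κ ^ 2 * f t ^ 2) (a := -1) (b := 0) (by norm_num)
      (fun t _ => hf t) (fun t ht => ?_) (by fun_prop) ?_
    · rw [h0, h1, intervalIntegral.integral_sub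
        ((by fun_prop : Continuous fun t => f' t ^ 2).intervalIntegrable _ _)
        ((by fun_prop : Continuous fun t => κ ^ 2 * f t ^ 2).intervalIntegrable _ _),
        intervalIntegral.integral_const_mul] at this
      simpa using this
    · have hi : HasDerivAt (fun t : ℝ => κ * (t + 1 / 2)) κ t := by
        exact (((hasDerivAt_id t).add_const (1 / 2)).const_mul κ).congr_deriv (mul_one κ)
      exact (((Real.hasDerivAt_tan (hcos t ht)).comp t hi).const_mul κ).neg
    · intro t ht
      have hc' := hcos t (Ioo_subset_Icc_self ht)
      have e : 1 / Real.cos (κ * (t + 1 / 2)) ^ 2 = 1 + Real.tan (κ * (t + 1 / 2)) ^ 2 := by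
        rw [Real.tan_eq_sin_div_cos]
        generalize κ * (t + 1 / 2) = s at hc'
        field_simp
        linarith [Real.sin_sq_add_cos_sq s]
      simp only [e]
      nlinarith [sq_nonneg (f' t + κ * Real.tan (κ * (t + 1 / 2)) * f t)]
  rw [intervalIntegral.integral_sub
        ((by fun_prop : Continuous fun t => f' t ^ 2).intervalIntegrable _ _)
        ((by fun_prop : Continuous fun t => π ^ 2 * f t ^ 2).intervalIntegrable _ _),
        intervalIntegral.integral_const_mul]
  have hlim : Filter.Tendsto (fun κ : ℝ => (∫ t in (-1 : ℝ)..0, f' t ^ 2) -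
      κ ^ 2 * ∫ t in (-1 : ℝ)..0, f t ^ 2) (nhdsWithin π (Iio π))
      (nhds ((∫ t in (-1 : ℝ)..0, f' t ^ 2) - π ^ 2 * ∫ t in (-1 : ℝ)..0, f t ^ 2)) := by
    refine Filter.Tendsto.mono_left (Continuous.tendsto ?_ π) nhdsWithin_le_nhds
    fun_prop
  refine ge_of_tendsto hlim ?_
  filter_upwards [Ioo_mem_nhdsLT Real.pi_pos] with κ hκ using key κ hκ

lemma hasDerivAt_snd {u : ℝ × ℝ → ℝ} (hu : Differentiable ℝ u) (x t : ℝ) :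
    HasDerivAt (fun t => u (x, t)) (fderiv ℝ u (x, t) (0, 1)) t :=
  (hu (x, t)).hasFDerivAt.comp_hasDerivAt t ((hasDerivAt_const t x).prodMk (hasDerivAt_id t))

lemma hasDerivAt_fst {u : ℝ × ℝ → ℝ} (hu : Differentiable ℝ u) (x t : ℝ) :
    HasDerivAt (fun x => u (x, t)) (fderiv ℝ u (x, t) (1, 0)) x :=
  (hu (x, t)).hasFDerivAt.comp_hasDerivAt x ((hasDerivAt_id x).prodMk (hasDerivAt_const x t))

lemma continuous_fderiv_dir {u : ℝ × ℝ → ℝ} (hu : ContDiff ℝ 1 u) (v : ℝ × ℝ) :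
    Continuous fun p => fderiv ℝ u p v :=
  (hu.continuous_fderiv one_ne_zero).clm_apply continuous_const

lemma integral_Ioo_eq_interval {f : ℝ → ℝ} {a b : ℝ} (h : a ≤ b) :
    ∫ t in Ioo a b, f t = ∫ t in a..b, f t := by
  rw [intervalIntegral.integral_of_le h, integral_Ioc_eq_integral_Ioo]

/-- Poincaré inequality in the transverse direction, with a weight in the longitudinal variable. -/
lemma poincare_slab {u : ℝ × ℝ → ℝ} (hu : ContDiff ℝ 1 u) {J : Set ℝ} (hJ : MeasurableSet J)
    (h0 : ∀ x ∈ J, u (x, -1) = 0 ∧ u (x, 0) = 0) {a : ℝ → ℝ} (ha : ∀ x ∈ J, 0 ≤ a x) :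
    0 ≤ ∫ p in J ×ˢ Ioo (-1 : ℝ) 0,
      a p.1 * ((fderiv ℝ u p (0, 1)) ^ 2 - π ^ 2 * u p ^ 2) := by
  by_cases hi : IntegrableOn (fun p : ℝ × ℝ =>
      a p.1 * ((fderiv ℝ u p (0, 1)) ^ 2 - π ^ 2 * u p ^ 2)) (J ×ˢ Ioo (-1 : ℝ) 0)
  · rw [Measure.volume_eq_prod] at hi ⊢
    rw [setIntegral_prod _ hi]
    refine setIntegral_nonneg hJ fun x hx => ?_
    simp only
    rw [integral_const_mul, integral_Ioo_eq_interval (by norm_num)]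
    refine mul_nonneg (ha x hx) ?_
    exact poincare_1d (f := fun t => u (x, t))
      (fun t => hasDerivAt_snd (hu.differentiable one_ne_zero) x t)
      ((continuous_fderiv_dir hu _).comp (by fun_prop)) (h0 x hx).1 (h0 x hx).2
  · rw [integral_undef hi]

lemma mem_Gam_iff {p : ℝ × ℝ} : p ∈ Gam ↔
    (-1 < p.1 ∧ -1 < p.2) ∧ (p.1 < 0 ∨ p.2 < 0) := by
  simp [Gam]

lemma mem_GamR_iff {R : ℝ} {p : ℝ × ℝ} : p ∈ GamR R ↔
    (-1 < p.1 ∧ -1 < p.2) ∧ (p.1 < 0 ∨ p.2 < 0) ∧ p.1 < R ∧ p.2 < R := by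
  simp only [GamR, Box, mem_inter_iff, mem_Gam_iff, mem_ofPred_eq, abs_lt]
  constructor
  · rintro ⟨⟨⟨a, b⟩, c⟩, d, e⟩
    exact ⟨⟨a, b⟩, c, by linarith [d.2], by linarith [e.2]⟩
  · rintro ⟨⟨a, b⟩, c, d, e⟩
    exact ⟨⟨⟨a, b⟩, c⟩, ⟨by linarith, by linarith⟩, by linarith, by linarith⟩

lemma isOpen_Box (L : ℝ) : IsOpen (Box L) := by
  have h1 : Continuous fun p : ℝ × ℝ => |p.1 + 1| := by fun_prop
  have h2 : Continuous fun p : ℝ × ℝ => |p.2 + 1| := by fun_prop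
  exact (isOpen_lt h1 continuous_const).inter (isOpen_lt h2 continuous_const)

lemma isOpen_GamR (R : ℝ) : IsOpen (GamR R) := isOpen_Gam.inter (isOpen_Box _)

lemma integral_swap_slab (f : ℝ × ℝ → ℝ) (A B : Set ℝ) :
    ∫ p in A ×ˢ B, f p = ∫ p in B ×ˢ A, f p.swap := by
  rw [Measure.volume_eq_prod, ← setIntegral_prod_swap]

/-- Splitting an integral over a set made of a core and two symmetric arms. -/
lemma integral_split {f : ℝ × ℝ → ℝ} {X Y : Set (ℝ × ℝ)} {J : Set ℝ}
    (hJ : MeasurableSet J) (hJ0 : J ⊆ Ici 0)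
    (hYJ : ∀ p ∈ Y, p.1 ∉ J ∧ p.2 ∉ J)
    (hX : X = Y ∪ (J ×ˢ Ioo (-1 : ℝ) 0 ∪ Ioo (-1 : ℝ) 0 ×ˢ J)) (hf : IntegrableOn f X) :
    ∫ p in X, f p = (∫ p in Y, f p) + (∫ p in J ×ˢ Ioo (-1 : ℝ) 0, f p) +
      ∫ p in J ×ˢ Ioo (-1 : ℝ) 0, f p.swap := by
  have m1 : MeasurableSet (J ×ˢ Ioo (-1 : ℝ) 0) := hJ.prod measurableSet_Ioo
  have m2 : MeasurableSet (Ioo (-1 : ℝ) 0 ×ˢ J) := measurableSet_Ioo.prod hJ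
  have d1 : Disjoint (J ×ˢ Ioo (-1 : ℝ) 0) (Ioo (-1 : ℝ) 0 ×ˢ J) := by
    rw [Set.disjoint_left]
    rintro p ⟨h1, h2⟩ ⟨h3, h4⟩
    exact absurd (hJ0 h1) (not_le.2 h3.2)
  have d2 : Disjoint Y (J ×ˢ Ioo (-1 : ℝ) 0 ∪ Ioo (-1 : ℝ) 0 ×ˢ J) := by
    rw [Set.disjoint_left]
    rintro p hp (⟨h1, h2⟩ | ⟨h1, h2⟩)
    · exact (hYJ p hp).1 h1
    · exact (hYJ p hp).2 h2
  subst hX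
  rw [setIntegral_union d2 (m1.union m2) (hf.mono_set subset_union_left)
    (hf.mono_set subset_union_right), setIntegral_union d1 m2
    (hf.mono_set (subset_union_left.trans subset_union_right))
    (hf.mono_set (subset_union_right.trans subset_union_right)), integral_swap_slab f _ J]
  ring

lemma integral_Gam_split {f : ℝ × ℝ → ℝ} {R : ℝ} (hR : 0 ≤ R) (hf : IntegrableOn f Gam) :
    ∫ p in Gam, f p = (∫ p in GamR R, f p) + (∫ p in Ici R ×ˢ Ioo (-1 : ℝ) 0, f p) +
      ∫ p in Ici R ×ˢ Ioo (-1 : ℝ) 0, f p.swap := by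
  refine integral_split measurableSet_Ici (Ici_subset_Ici.2 hR)
    ?_ ?_ hf
  · intro p hp
    rw [mem_GamR_iff] at hp
    simp [hp.2.2.1, hp.2.2.2]
  · ext p
    simp only [mem_union, mem_prod, mem_Gam_iff, mem_GamR_iff, mem_Ici, mem_Ioo]
    by_cases h1 : p.1 < R <;> by_cases h2 : p.2 < R <;> simp only [h1, h2] <;> grind

lemma integral_GamR_split {f : ℝ × ℝ → ℝ} {R : ℝ} (hR : 0 ≤ R) (hf : IntegrableOn f (GamR R)) :
    ∫ p in GamR R, f p = (∫ p in GamR 0, f p) + (∫ p in Ico 0 R ×ˢ Ioo (-1 : ℝ) 0, f p) +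
      ∫ p in Ico 0 R ×ˢ Ioo (-1 : ℝ) 0, f p.swap := by
  refine integral_split measurableSet_Ico (fun x hx => hx.1)
    ?_ ?_ hf
  · intro p hp
    rw [mem_GamR_iff] at hp
    constructor
    · exact fun h => absurd h.1 (not_le.2 hp.2.2.1)
    · exact fun h => absurd h.1 (not_le.2 hp.2.2.2)
  · ext p
    simp only [mem_union, mem_prod, mem_GamR_iff, mem_Ico, mem_Ioo]
    grind

lemma fderiv_swap (u : ℝ × ℝ → ℝ) (p v : ℝ × ℝ) :
    fderiv ℝ (u ∘ Prod.swap) p v = fderiv ℝ u p.swap v.swap := by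
  have := (ContinuousLinearEquiv.prodComm ℝ ℝ ℝ).comp_right_fderiv (f := u) (x := p)
  have e : (u ∘ (ContinuousLinearEquiv.prodComm ℝ ℝ ℝ)) = u ∘ Prod.swap := rfl
  rw [e] at this
  rw [this]; rfl

lemma gradSq2_swap (u : ℝ × ℝ → ℝ) (p : ℝ × ℝ) :
    gradSq2 (u ∘ Prod.swap) p = gradSq2 u p.swap := by
  simp only [gradSq2, fderiv_swap, Prod.swap_prod_mk]
  ring

lemma contDiff_swap {u : ℝ × ℝ → ℝ} (hu : ContDiff ℝ 1 u) : ContDiff ℝ 1 (u ∘ Prod.swap) :=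
  hu.comp (contDiff_snd.prodMk contDiff_fst)

/-- A function compactly supported in the unit square, hence admissible for both problems. -/
lemma exists_bump : ∃ u : ℝ × ℝ → ℝ, ContDiff ℝ 1 u ∧ HasCompactSupport u ∧
    tsupport u ⊆ Gam ∧ ∀ X, GamR 0 ⊆ X → (∫ p in X, u p ^ 2) ≠ 0 := by
  obtain ⟨φ, hφ⟩ : ∃ φ : ContDiffBump ((-(1 / 2), -(1 / 2)) : ℝ × ℝ), φ.rOut = 1 / 4 :=
    ⟨⟨1 / 8, 1 / 4, by norm_num, by norm_num⟩, rfl⟩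
  have hsub : tsupport φ ⊆ GamR 0 := by
    intro p hp
    rw [φ.tsupport_eq, Metric.mem_closedBall, Prod.dist_eq, hφ, max_le_iff, Real.dist_eq,
      Real.dist_eq, abs_le, abs_le] at hp
    obtain ⟨⟨a, b⟩, c, d⟩ := hp
    rw [mem_GamR_iff]
    dsimp only at a b c d
    refine ⟨⟨by linarith, by linarith⟩, Or.inl (by linarith), by linarith, by linarith⟩
  have hcs : HasCompactSupport fun p => φ p ^ 2 :=
    φ.hasCompactSupport.comp_left (g := fun x : ℝ => x ^ 2) (by norm_num)
  refine ⟨φ, φ.contDiff, φ.hasCompactSupport, hsub.trans inter_subset_left, ?_⟩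
  intro X hX
  have h2 : ∫ p in X, φ p ^ 2 = ∫ p, φ p ^ 2 := by
    refine setIntegral_eq_integral_of_forall_compl_eq_zero fun p hp => ?_
    rw [image_eq_zero_of_notMem_tsupport (fun h => hp (hX (hsub h)))]
    norm_num
  rw [h2]
  refine ((φ.continuous.pow 2).integral_pos_of_hasCompactSupport_nonneg_nonzero
    (x := (-(1 / 2), -(1 / 2))) hcs (fun p => sq_nonneg _) ?_).ne'
  have : φ (-(1 / 2), -(1 / 2)) = 1 :=
    φ.one_of_mem_closedBall (Metric.mem_closedBall_self φ.rIn_pos.le)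
  rw [Pi.pow_apply, this]
  norm_num

lemma DirB_subset (R : ℝ) : DirB R ⊆ frontier Gam := by
  rintro p ⟨hp, hn⟩
  rcases frontier_inter_subset Gam (Box (R + 1)) hp with h | h
  · exact h.1
  · exact absurd ⟨hp, h.2⟩ hn

lemma admR_of_tsupport {u : ℝ × ℝ → ℝ} (hu : ContDiff ℝ 1 u) (hs : tsupport u ⊆ Gam) (R : ℝ) :
    AdmR R u := by
  refine ⟨hu, fun p hp => image_eq_zero_of_notMem_tsupport fun h => ?_⟩
  have := DirB_subset R hp
  rw [isOpen_Gam.frontier_eq] at this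
  exact this.2 (hs h)

lemma integrable_cs {u : ℝ × ℝ → ℝ} (hu : ContDiff ℝ 1 u) (hc : HasCompactSupport u) :
    Integrable (fun p => u p ^ 2) ∧ Integrable (gradSq2 u) := by
  obtain ⟨K, hK⟩ := hu.lipschitzWith_of_hasCompactSupport hc one_ne_zero
  exact ⟨integrable_sq hu.continuous hc, integrable_gradSq2 hK hc⟩

/-- A half-strip cut off from the guide contributes at least `π²`. -/
lemma slab_lower {u : ℝ × ℝ → ℝ} (hu : ContDiff ℝ 1 u) (hc : HasCompactSupport u)
    (h0 : ∀ p ∉ Gam, u p = 0) {R : ℝ} (hR : 0 ≤ R) :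
    π ^ 2 * ∫ p in Ici R ×ˢ Ioo (-1 : ℝ) 0, u p ^ 2 ≤
      ∫ p in Ici R ×ˢ Ioo (-1 : ℝ) 0, gradSq2 u p := by
  obtain ⟨h1, h2⟩ := integrable_cs hu hc
  have h := poincare_slab hu (measurableSet_Ici (a := R)) (a := fun _ => 1) (fun x hx => ⟨h0 _ ?_, h0 _ ?_⟩)
    (fun x _ => zero_le_one)
  · rw [← integral_const_mul, ← sub_nonneg, ← integral_sub h2.integrableOn (h1.integrableOn.const_mul _)]
    refine h.trans (setIntegral_mono_on ?_ ?_ (measurableSet_Ici.prod measurableSet_Ioo) ?_)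
    · obtain ⟨K, hK⟩ := hu.lipschitzWith_of_hasCompactSupport hc one_ne_zero
      simp only [one_mul]
      exact ((integrable_fderiv_sq hK hc _).sub (h1.const_mul _)).integrableOn
    · exact (h2.sub (h1.const_mul _)).integrableOn
    · intro p _
      simp only [gradSq2]
      nlinarith [sq_nonneg (fderiv ℝ u p (1, 0))]
  · simp [mem_Gam_iff]
  · have : R ≤ x := hx
    simp [mem_Gam_iff]; intros; linarith

/-- Bracketing: imposing a Neumann condition at the cuts lowers the eigenvalue, and the
half-strips that are cut off contribute at least `π²`. -/
lemma lamR_le_lamG {R : ℝ} (hR : 0 ≤ R) : lamR R ≤ lamG := by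
  have key : min (lamR R) (π ^ 2) ≤ lamG := by
    refine le_csInf ?_ ?_
    · obtain ⟨u, h1, h2, h3, h4⟩ := exists_bump
      exact ⟨_, u, h1, h2, h3, h4 _ inter_subset_left, rfl⟩
    · rintro r ⟨u, hu, hc, hs, hN, rfl⟩
      have hN0 : 0 ≤ ∫ p in Gam, u p ^ 2 := integral_nonneg fun p => sq_nonneg _
      rw [le_div_iff₀ (lt_of_le_of_ne hN0 (Ne.symm hN))]
      have h0 : ∀ p ∉ Gam, u p = 0 := fun p hp =>
        image_eq_zero_of_notMem_tsupport fun h => hp (hs h)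
      obtain ⟨h1, h2⟩ := integrable_cs hu hc
      have hu' := contDiff_swap hu
      have hc' : HasCompactSupport (u ∘ Prod.swap) :=
        hc.comp_homeomorph (Homeomorph.prodComm ℝ ℝ)
      have h0' : ∀ p ∉ Gam, (u ∘ Prod.swap) p = 0 := fun p hp => h0 _ (by
        simpa [mem_Gam_iff, and_comm, or_comm] using hp)
      have a1 := lamR_mul_le (admR_of_tsupport hu hs R)
      have a2 := slab_lower hu hc h0 hR
      have a3 := slab_lower hu' hc' h0' hR
      simp only [gradSq2_swap] at a3
      rw [integral_Gam_split hR h1.integrableOn, integral_Gam_split hR h2.integrableOn]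
      have m1 := min_le_left (lamR R) (π ^ 2)
      have m2 := min_le_right (lamR R) (π ^ 2)
      have n1 : 0 ≤ ∫ p in GamR R, u p ^ 2 := integral_nonneg fun p => sq_nonneg _
      have n2 : 0 ≤ ∫ p in Ici R ×ˢ Ioo (-1 : ℝ) 0, u p ^ 2 := integral_nonneg fun p => sq_nonneg _
      have n3 : 0 ≤ ∫ p in Ici R ×ˢ Ioo (-1 : ℝ) 0, (u ∘ Prod.swap) p ^ 2 :=
        integral_nonneg fun p => sq_nonneg _
      have b1 := mul_le_mul_of_nonneg_right m1 n1
      have b2 := mul_le_mul_of_nonneg_right m2 n2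
      have b3 := mul_le_mul_of_nonneg_right m2 n3
      simp only [Function.comp] at *
      linarith
  rcases min_le_iff.1 key with h | h
  · exact h
  · exact absurd lamG_lt (not_lt.2 h)

/-! ### Reflection, cut-off and the trial function -/

lemma mem_DirB {R : ℝ} {z : ℝ × ℝ} (hm : min z.1 z.2 = -1 ∨ min z.1 z.2 = 0)
    (h1 : z.1 < R) (h2 : z.2 < R) : z ∈ DirB R := by
  have hlow : -1 ≤ min z.1 z.2 := by rcases hm with h | h <;> rw [h]; norm_num
  obtain ⟨l1, l2⟩ := le_min_iff.1 hlow
  have hbox : z ∈ Box (R + 1) := by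
    simp only [Box, mem_ofPred_eq, abs_lt]
    exact ⟨⟨by linarith, by linarith⟩, by linarith, by linarith⟩
  have hnot : z ∉ GamR R := fun h => by
    have := h.1
    simp only [Gam, mem_ofPred_eq] at this
    rcases hm with h | h <;> rw [h] at this <;> linarith [this.1, this.2]
  have hcl : z ∈ closure (GamR R) := by
    -- translate along the diagonal into the guide
    obtain ⟨σ, hσ⟩ : ∃ σ : ℝ, ∀ᶠ s in nhdsWithin (0 : ℝ) (Ioi 0),
        (z.1 + σ * s, z.2 + σ * s) ∈ GamR R := by
      rcases hm with h | h
      · refine ⟨1, ?_⟩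
        have hpos : (0 : ℝ) < min 1 (min (R - z.1) (R - z.2)) := by
          simp only [lt_min_iff]; exact ⟨one_pos, by linarith, by linarith⟩
        filter_upwards [Ioo_mem_nhdsGT hpos] with s hs
        have h3 := hs.2
        simp only [lt_min_iff] at h3
        have hs1 := hs.1
        rw [mem_GamR_iff]
        refine ⟨⟨by linarith, by linarith⟩, ?_, by linarith, by linarith⟩
        rcases min_choice z.1 z.2 with h' | h' <;> rw [h'] at h
        · left; linarith
        · right; linarith
      · refine ⟨-1, ?_⟩
        filter_upwards [Ioo_mem_nhdsGT (one_pos : (0 : ℝ) < 1)] with s hs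
        have hs1 := hs.1
        have hs2 := hs.2
        have l3 : 0 ≤ min z.1 z.2 := h.ge
        obtain ⟨l3, l4⟩ := le_min_iff.1 l3
        rw [mem_GamR_iff]
        refine ⟨⟨by linarith, by linarith⟩, ?_, by linarith, by linarith⟩
        rcases min_choice z.1 z.2 with h' | h' <;> rw [h'] at h
        · left; linarith
        · right; linarith
    refine mem_closure_of_tendsto (f := fun s : ℝ => (z.1 + σ * s, z.2 + σ * s)) ?_ hσ
    have : Continuous fun s : ℝ => (z.1 + σ * s, z.2 + σ * s) := by fun_prop
    have h := this.tendsto 0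
    simp only [mul_zero, add_zero] at h
    exact h.mono_left nhdsWithin_le_nhds
  have hfr : z ∈ frontier (GamR R) := by
    rw [(isOpen_GamR R).frontier_eq]; exact ⟨hcl, hnot⟩
  refine ⟨hfr, fun h => ?_⟩
  have := h.2
  rw [(isOpen_Box _).frontier_eq] at this
  exact this.2 hbox

/-- An admissible function vanishes on the whole lateral boundary, including its end points on
the cuts, by continuity. -/
lemma AdmR.zero {R : ℝ} (hR : 0 < R) {u : ℝ × ℝ → ℝ} (hu : AdmR R u) {z : ℝ × ℝ}
    (hm : min z.1 z.2 = -1 ∨ min z.1 z.2 = 0) (h1 : z.1 ≤ R) (h2 : z.2 ≤ R) : u z = 0 := by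
  have hc : Continuous fun s : ℝ => u (min z.1 (R - s), min z.2 (R - s)) :=
    hu.1.continuous.comp (by fun_prop)
  have ht := (hc.tendsto 0).mono_left (nhdsWithin_le_nhds (s := Ioi 0))
  simp only [sub_zero, min_eq_left h1, min_eq_left h2] at ht
  refine tendsto_nhds_unique_of_eventuallyEq ht (tendsto_const_nhds (x := (0 : ℝ))) ?_
  filter_upwards [Ioo_mem_nhdsGT hR] with s hs
  refine hu.2 _ (mem_DirB ?_ ?_ ?_)
  · have : min (min z.1 (R - s)) (min z.2 (R - s)) = min z.1 z.2 := by
      rw [min_min_min_comm, min_self, min_eq_left]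
      rcases hm with h | h <;> rw [h] <;> linarith [hs.2]
    simpa only [this] using hm
  · exact (min_le_right _ _).trans_lt (by linarith [hs.1])
  · exact (min_le_right _ _).trans_lt (by linarith [hs.1])

/-- A Lipschitz retraction of the plane onto the closure of `Γ_R`, sending the complement of the
guide `Γ` to the lateral boundary: translate along the diagonal, then clamp at the cuts. -/
def retr (R : ℝ) (p : ℝ × ℝ) : ℝ × ℝ :=
  (min R (p.1 + (max (-1) (min (min p.1 p.2) 0) - min p.1 p.2)),
    min R (p.2 + (max (-1) (min (min p.1 p.2) 0) - min p.1 p.2)))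

lemma min_retr {R : ℝ} (hR : 0 ≤ R) (p : ℝ × ℝ) :
    min (retr R p).1 (retr R p).2 = max (-1) (min (min p.1 p.2) 0) := by
  simp only [retr]
  rw [min_min_min_comm, min_self, min_add_add_right, add_sub_cancel, min_eq_right]
  exact max_le (by linarith) ((min_le_right _ _).trans hR)

lemma retr_of_mem {R : ℝ} {p : ℝ × ℝ} (hp : p ∈ Gam) (h1 : p.1 ≤ R) (h2 : p.2 ≤ R) :
    retr R p = p := by
  have h : max (-1) (min (min p.1 p.2) 0) = min p.1 p.2 := by
    rw [min_eq_left (le_of_lt hp.2), max_eq_right (le_of_lt hp.1)]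
  simp [retr, h, h1, h2]

lemma min_retr_of_notMem {R : ℝ} (hR : 0 ≤ R) {p : ℝ × ℝ} (hp : p ∉ Gam) :
    min (retr R p).1 (retr R p).2 = -1 ∨ min (retr R p).1 (retr R p).2 = 0 := by
  rw [min_retr hR]
  by_cases h : -1 < min p.1 p.2
  · right
    have h' : 0 ≤ min p.1 p.2 := not_lt.1 fun h' => hp ⟨h, h'⟩
    rw [min_eq_right h', max_eq_right (by norm_num)]
  · left
    exact max_eq_left ((min_le_left _ _).trans (not_lt.1 h))

lemma retr_mem {R : ℝ} (hR : 0 ≤ R) (p : ℝ × ℝ) : retr R p ∈ Icc (-1 : ℝ) R ×ˢ Icc (-1 : ℝ) R := by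
  have h : -1 ≤ min (retr R p).1 (retr R p).2 := by rw [min_retr hR]; exact le_max_left _ _
  obtain ⟨h1, h2⟩ := le_min_iff.1 h
  exact ⟨⟨h1, min_le_left _ _⟩, h2, min_le_left _ _⟩

lemma retr_lip (R : ℝ) : ∃ K, LipschitzWith K (retr R) := by
  have hm : LipschitzWith _ fun p : ℝ × ℝ => min p.1 p.2 :=
    LipschitzWith.prod_fst.min LipschitzWith.prod_snd
  have hd := ((hm.min_const 0).const_max (-1)).sub hm
  exact ⟨_, ((LipschitzWith.prod_fst.add hd).const_min R).prodMk
    ((LipschitzWith.prod_snd.add hd).const_min R)⟩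

lemma retr_swap (R : ℝ) (p : ℝ × ℝ) : retr R p.swap = (retr R p).swap := by
  simp [retr, min_comm]

lemma comp_retr_lip {R : ℝ} (hR : 0 ≤ R) {u : ℝ × ℝ → ℝ} (hu : ContDiff ℝ 1 u) :
    (∃ K, LipschitzWith K fun p => u (retr R p)) ∧ ∃ C : NNReal, ∀ p, |u (retr R p)| ≤ C := by
  have hQ : IsCompact (Icc (-1 : ℝ) R ×ˢ Icc (-1 : ℝ) R) := isCompact_Icc.prod isCompact_Icc
  constructor
  · obtain ⟨C, hC⟩ := hQ.exists_bound_of_continuousOn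
      (hu.continuous_fderiv one_ne_zero).continuousOn
    have hC0 : 0 ≤ C := (norm_nonneg _).trans (hC (retr R 0) (retr_mem hR 0))
    have hl : LipschitzOnWith ⟨C, hC0⟩ u (Icc (-1 : ℝ) R ×ˢ Icc (-1 : ℝ) R) :=
      Convex.lipschitzOnWith_of_nnnorm_fderiv_le
        (fun x _ => (hu.differentiable one_ne_zero) x)
        (fun x hx => hC x hx) ((convex_Icc _ _).prod (convex_Icc _ _))
    obtain ⟨K, hK⟩ := retr_lip R
    refine ⟨⟨C, hC0⟩ * K, ?_⟩
    have := hl.comp (hK.lipschitzOnWith (s := univ)) (fun p _ => retr_mem hR p)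
    exact lipschitzOnWith_univ.1 this
  · obtain ⟨C, hC⟩ := hQ.exists_bound_of_continuousOn hu.continuous.continuousOn
    have hC0 : 0 ≤ C := (norm_nonneg _).trans (hC (retr R 0) (retr_mem hR 0))
    exact ⟨⟨C, hC0⟩, fun p => hC _ (retr_mem hR p)⟩

lemma hasDerivAt_tanh (x : ℝ) : HasDerivAt Real.tanh (1 - Real.tanh x ^ 2) x := by
  have h := (Real.hasDerivAt_sinh x).div (Real.hasDerivAt_cosh x) (Real.cosh_pos x).ne'
  have e : Real.tanh = fun x => Real.sinh x / Real.cosh x := by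
    ext x; exact Real.tanh_eq_sinh_div_cosh x
  rw [e]
  refine h.congr_deriv ?_
  have := (Real.cosh_pos x).ne'
  field_simp

lemma strictMono_tanh : StrictMono Real.tanh :=
  strictMono_of_deriv_pos fun x => by
    rw [(hasDerivAt_tanh x).deriv]; linarith [Real.tanh_sq_lt_one x]

lemma lipschitz_tanh : LipschitzWith 1 Real.tanh := by
  refine lipschitzWith_of_nnnorm_deriv_le (fun x => (hasDerivAt_tanh x).differentiableAt) fun x => ?_
  rw [(hasDerivAt_tanh x).deriv, ← NNReal.coe_le_coe, coe_nnnorm, Real.norm_eq_abs, NNReal.coe_one,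
    abs_le]
  constructor <;> nlinarith [Real.tanh_sq_lt_one x, sq_nonneg (Real.tanh x)]

lemma tanh_pos {x : ℝ} (hx : 0 < x) : 0 < Real.tanh x := by
  simpa using strictMono_tanh hx

/-- The cut-off profile `α`: equal to `1` on `(-∞, 0]` and to `0` on `[2R, ∞)`, with
`α(t) + α(2R - t) = 1`. With the hyperbolic tangent as transition, the
longitudinal remainder in `arm_le` is a square plus an exact derivative. -/
def cutα (ω R t : ℝ) : ℝ :=
  (1 + Real.tanh (ω * max (-R) (min R (R - t))) / Real.tanh (ω * R)) / 2

lemma cutα_lip (ω R : ℝ) : ∃ K, LipschitzWith K (cutα ω R) := by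
  have h1 : LipschitzWith 1 fun t : ℝ => R - t :=
    LipschitzWith.of_dist_le_mul fun x y => by
      rw [Real.dist_eq, Real.dist_eq, sub_sub_sub_cancel_left, abs_sub_comm, NNReal.coe_one, one_mul]
  have h2 : LipschitzWith _ fun t : ℝ => ω * max (-R) (min R (R - t)) :=
    (lipschitzWith_smul ω).comp ((h1.const_min R).const_max (-R))
  have h3 : LipschitzWith _ fun t : ℝ =>
      (1 / 2 / Real.tanh (ω * R)) * Real.tanh (ω * max (-R) (min R (R - t))) :=
    (lipschitzWith_smul (1 / 2 / Real.tanh (ω * R))).comp (lipschitz_tanh.comp h2)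
  have h4 := (LipschitzWith.const (1 / 2 : ℝ)).add h3
  have e : cutα ω R = fun t => 1 / 2 +
      (1 / 2 / Real.tanh (ω * R)) * Real.tanh (ω * max (-R) (min R (R - t))) := by
    funext t
    rw [cutα]; ring
  exact ⟨_, e ▸ h4⟩

lemma cutα_bdd (ω R : ℝ) : ∃ C : NNReal, ∀ t, |cutα ω R t| ≤ C := by
  refine ⟨Real.toNNReal ((1 + 1 / |Real.tanh (ω * R)|) / 2), fun t => ?_⟩
  rw [cutα, abs_div, abs_two, Real.coe_toNNReal _ (by positivity)]
  gcongr
  refine (abs_add_le _ _).trans ?_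
  rw [abs_one, abs_div]
  gcongr
  exact (Real.abs_tanh_lt_one _).le

lemma cutα_of_nonpos {ω R t : ℝ} (hω : 0 < ω) (hR : 0 < R) (ht : t ≤ 0) : cutα ω R t = 1 := by
  rw [cutα, min_eq_left (by linarith), max_eq_right (by linarith),
    div_self (tanh_pos (mul_pos hω hR)).ne']
  norm_num

lemma cutα_of_ge {ω R t : ℝ} (hω : 0 < ω) (hR : 0 < R) (ht : 2 * R ≤ t) : cutα ω R t = 0 := by
  rw [cutα, min_eq_right (by linarith), max_eq_left (by linarith), mul_neg, Real.tanh_neg, neg_div,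
    div_self (tanh_pos (mul_pos hω hR)).ne']
  norm_num

lemma cutα_of_mem {ω R t : ℝ} (ht : t ∈ Icc 0 (2 * R)) :
    cutα ω R t = (1 + Real.tanh (ω * (R - t)) / Real.tanh (ω * R)) / 2 := by
  rw [cutα, min_eq_right (by linarith [ht.1]), max_eq_right (by linarith [ht.2])]

/-- The trial function for the infinite guide built from `u` on `Γ_R`: extend `u` by reflection
across the cuts and multiply by the cut-off profiles. -/
def extU (ω R : ℝ) (u : ℝ × ℝ → ℝ) (p : ℝ × ℝ) : ℝ :=
  cutα ω R p.1 * cutα ω R p.2 * u (retr R (R - |p.1 - R|, R - |p.2 - R|))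

lemma extU_swap (ω R : ℝ) (u : ℝ × ℝ → ℝ) : extU ω R u ∘ Prod.swap = extU ω R (u ∘ Prod.swap) := by
  ext p
  have := retr_swap R (R - |p.1 - R|, R - |p.2 - R|)
  simp only [Prod.swap_prod_mk] at this
  simp only [extU, Function.comp, Prod.fst_swap, Prod.snd_swap, this]
  ring

lemma extU_lip {ω R : ℝ} (hR : 0 ≤ R) {u : ℝ × ℝ → ℝ} (hu : ContDiff ℝ 1 u) :
    ∃ K, LipschitzWith K (extU ω R u) := by
  obtain ⟨⟨K1, h1⟩, C1, b1⟩ := comp_retr_lip hR hu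
  obtain ⟨K2, h2⟩ := cutα_lip ω R
  obtain ⟨C2, b2⟩ := cutα_bdd ω R
  have r1 : LipschitzWith 1 fun t : ℝ => R - |t - R| :=
    LipschitzWith.of_dist_le_mul fun x y => by
      simp only [Real.dist_eq, NNReal.coe_one, one_mul]
      rw [sub_sub_sub_cancel_left, abs_sub_comm x y]
      exact (abs_abs_sub_abs_le_abs_sub _ _).trans (by rw [sub_sub_sub_cancel_right])
  have r2 : LipschitzWith _ fun p : ℝ × ℝ => (R - |p.1 - R|, R - |p.2 - R|) :=
    (r1.comp LipschitzWith.prod_fst).prodMk (r1.comp LipschitzWith.prod_snd)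
  have c1 : LipschitzWith (K2 * 1) fun p : ℝ × ℝ => cutα ω R p.1 :=
    h2.comp LipschitzWith.prod_fst
  have c2 : LipschitzWith (K2 * 1) fun p : ℝ × ℝ => cutα ω R p.2 :=
    h2.comp LipschitzWith.prod_snd
  have c3 : LipschitzWith _ fun p : ℝ × ℝ => u (retr R (R - |p.1 - R|, R - |p.2 - R|)) :=
    h1.comp r2
  have ha := lipschitz_mul_of_bound c1 c2 (fun p => b2 p.1) (fun p => b2 p.2)
  have hb : ∀ p : ℝ × ℝ, |cutα ω R p.1 * cutα ω R p.2| ≤ ((C2 * C2 : NNReal) : ℝ) := fun p => by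
    rw [abs_mul, NNReal.coe_mul]
    exact mul_le_mul (b2 _) (b2 _) (abs_nonneg _) C2.coe_nonneg
  exact ⟨_, lipschitz_mul_of_bound ha c3 hb (fun p => b1 _)⟩

lemma refl_of_le {R t : ℝ} (h : t ≤ R) : R - |t - R| = t := by
  rw [abs_of_nonpos (by linarith)]; ring

lemma refl_of_ge {R t : ℝ} (h : R ≤ t) : R - |t - R| = 2 * R - t := by
  rw [abs_of_nonneg (by linarith)]; ring

lemma extU_zero {ω R : ℝ} (hω : 0 < ω) (hR : 0 < R) {u : ℝ × ℝ → ℝ} (hu : AdmR R u) {p : ℝ × ℝ}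
    (hp : p ∉ Gam) : extU ω R u p = 0 := by
  by_cases h1 : 2 * R ≤ p.1
  · simp [extU, cutα_of_ge hω hR h1]
  by_cases h2 : 2 * R ≤ p.2
  · simp [extU, cutα_of_ge hω hR h2]
  have hq : (R - |p.1 - R|, R - |p.2 - R|) ∉ Gam := by
    intro h
    apply hp
    rw [mem_Gam_iff] at h ⊢
    have a1 : -1 < R - |p.1 - R| := h.1.1
    have a2 : -1 < R - |p.2 - R| := h.1.2
    have a3 : R - |p.1 - R| < 0 ∨ R - |p.2 - R| < 0 := h.2
    refine ⟨⟨?_, ?_⟩, ?_⟩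
    · linarith [neg_abs_le (p.1 - R)]
    · linarith [neg_abs_le (p.2 - R)]
    · rcases a3 with a | a
      · left
        by_contra hc
        have : |p.1 - R| ≤ R := abs_le.2 ⟨by linarith, by linarith⟩
        linarith
      · right
        by_contra hc
        have : |p.2 - R| ≤ R := abs_le.2 ⟨by linarith, by linarith⟩
        linarith
  have hm := retr_mem hR.le (R - |p.1 - R|, R - |p.2 - R|)
  rw [extU, hu.zero hR (min_retr_of_notMem hR.le hq) hm.1.2 hm.2.2, mul_zero]

lemma extU_compact {ω R : ℝ} (hω : 0 < ω) (hR : 0 < R) {u : ℝ × ℝ → ℝ} (hu : AdmR R u) :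
    HasCompactSupport (extU ω R u) := by
  refine HasCompactSupport.intro (isCompact_Icc (a := ((-1, -1) : ℝ × ℝ)) (b := (2 * R, 2 * R)))
    fun p hp => ?_
  by_contra h
  apply hp
  have hG : p ∈ Gam := by by_contra hG; exact h (extU_zero hω hR hu hG)
  rw [mem_Gam_iff] at hG
  refine ⟨⟨hG.1.1.le, hG.1.2.le⟩, ?_, ?_⟩
  · by_contra hc
    exact h (by simp [extU, cutα_of_ge hω hR (not_le.1 hc).le])
  · by_contra hc
    exact h (by simp [extU, cutα_of_ge hω hR (not_le.1 hc).le])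

lemma extU_core {ω R : ℝ} (hω : 0 < ω) (hR : 0 < R) (u : ℝ × ℝ → ℝ) {p : ℝ × ℝ} (hp : p ∈ GamR 0) :
    extU ω R u p = u p := by
  have h := mem_GamR_iff.1 hp
  have h1 := h.2.2.1
  have h2 := h.2.2.2
  rw [extU, cutα_of_nonpos hω hR h1.le, cutα_of_nonpos hω hR h2.le, refl_of_le (by linarith),
    refl_of_le (by linarith), retr_of_mem hp.1 (by linarith) (by linarith)]
  simp

lemma extU_arm {ω R : ℝ} (hω : 0 < ω) (hR : 0 < R) (u : ℝ × ℝ → ℝ) {p : ℝ × ℝ}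
    (hp : p ∈ Icc 0 R ×ˢ Ioo (-1 : ℝ) 0) :
    extU ω R u p = (1 + Real.tanh (ω * (R - p.1)) / Real.tanh (ω * R)) / 2 * u p := by
  obtain ⟨⟨h1, h2⟩, h3, h4⟩ := hp
  have hG : p ∈ Gam := mem_Gam_iff.2 ⟨⟨by linarith, h3⟩, Or.inr h4⟩
  rw [extU, cutα_of_mem ⟨h1, by linarith⟩, cutα_of_nonpos hω hR h4.le, refl_of_le h2,
    refl_of_le (by linarith), retr_of_mem hG h2 (by linarith), mul_one]

lemma extU_arm' {ω R : ℝ} (hω : 0 < ω) (hR : 0 < R) (u : ℝ × ℝ → ℝ) {p : ℝ × ℝ}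
    (hp : p ∈ Icc R (2 * R) ×ˢ Ioo (-1 : ℝ) 0) :
    extU ω R u p =
      (1 + Real.tanh (ω * (R - p.1)) / Real.tanh (ω * R)) / 2 * u (2 * R - p.1, p.2) := by
  obtain ⟨⟨h1, h2⟩, h3, h4⟩ := hp
  have hG : (2 * R - p.1, p.2) ∈ Gam := mem_Gam_iff.2 ⟨⟨by simp; linarith, h3⟩, Or.inr h4⟩
  rw [extU, cutα_of_mem ⟨by linarith, h2⟩, cutα_of_nonpos hω hR h4.le, refl_of_ge h1,
    refl_of_le (by linarith), retr_of_mem hG (by simp; linarith) (by simp; linarith), mul_one]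

/-! ### Integration on the arms and traces -/

lemma fderiv_mul_fst {β : ℝ → ℝ} {β' : ℝ} {u : ℝ × ℝ → ℝ} {p : ℝ × ℝ} (hβ : HasDerivAt β β' p.1)
    (hu : DifferentiableAt ℝ u p) (v : ℝ × ℝ) :
    fderiv ℝ (fun p => β p.1 * u p) p v = β p.1 * fderiv ℝ u p v + u p * (β' * v.1) := by
  have h1 : HasFDerivAt (fun p : ℝ × ℝ => β p.1) (β' • ContinuousLinearMap.fst ℝ ℝ ℝ) p :=
    hβ.comp_hasFDerivAt p hasFDerivAt_fst
  have h2 : fderiv ℝ (fun p => β p.1 * u p) p = _ := (h1.mul hu.hasFDerivAt).fderiv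
  rw [h2]
  simp

lemma fderiv_reflect {u : ℝ × ℝ → ℝ} (hu : Differentiable ℝ u) (c : ℝ) (p v : ℝ × ℝ) :
    DifferentiableAt ℝ (fun p : ℝ × ℝ => u (c - p.1, p.2)) p ∧
    fderiv ℝ (fun p : ℝ × ℝ => u (c - p.1, p.2)) p v = fderiv ℝ u (c - p.1, p.2) (-v.1, v.2) := by
  have h1 : HasFDerivAt (fun p : ℝ × ℝ => (c - p.1, p.2))
      ((-ContinuousLinearMap.fst ℝ ℝ ℝ).prod (ContinuousLinearMap.snd ℝ ℝ ℝ)) p :=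
    (hasFDerivAt_fst.const_sub c).prodMk hasFDerivAt_snd
  have h2 := (hu (c - p.1, p.2)).hasFDerivAt.comp p h1
  refine ⟨h2.differentiableAt, ?_⟩
  have h3 := h2.fderiv
  simp only [Function.comp_def] at h3
  rw [h3]
  simp

lemma integral_reflect (f : ℝ × ℝ → ℝ) (R : ℝ) (J : Set ℝ) :
    ∫ p in Ioo R (2 * R) ×ˢ J, f p = ∫ p in Ioo 0 R ×ˢ J, f (2 * R - p.1, p.2) := by
  let e : ℝ × ℝ ≃ᵐ ℝ × ℝ := (MeasurableEquiv.subLeft (2 * R)).prodCongr (MeasurableEquiv.refl ℝ)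
  have he : MeasurePreserving e volume volume :=
    (Measure.measurePreserving_sub_left volume (2 * R)).prod (MeasurePreserving.id volume)
  have h := he.setIntegral_preimage_emb e.measurableEmbedding f (Ioo R (2 * R) ×ˢ J)
  rw [← h]
  have hs : e ⁻¹' (Ioo R (2 * R) ×ˢ J) = Ioo 0 R ×ˢ J := by
    ext p
    change ((R < 2 * R - p.1 ∧ 2 * R - p.1 < 2 * R) ∧ p.2 ∈ J) ↔ ((0 < p.1 ∧ p.1 < R) ∧ p.2 ∈ J)
    constructor
    · rintro ⟨⟨a, b⟩, c⟩; exact ⟨⟨by linarith, by linarith⟩, c⟩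
    · rintro ⟨⟨a, b⟩, c⟩; exact ⟨⟨by linarith, by linarith⟩, c⟩
  rw [hs]
  rfl

lemma integral_arm_split {f : ℝ × ℝ → ℝ} (hf : Integrable f) {R : ℝ} (hR : 0 < R) (J : Set ℝ)
    (hJ : MeasurableSet J) (h0 : ∀ p : ℝ × ℝ, 2 * R < p.1 → f p = 0) :
    ∫ p in Ici 0 ×ˢ J, f p = ∫ p in Ioo 0 R ×ˢ J, (f p + f (2 * R - p.1, p.2)) := by
  have hnull : ∀ c : ℝ, ∀ᵐ t : ℝ, t ≠ c := fun c => by simp [ae_iff]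
  have h1 : (Ici 0 : Set ℝ) =ᵐ[volume] ((Ioo 0 R ∪ Ioo R (2 * R)) ∪ Ioi (2 * R) : Set ℝ) := by
    filter_upwards [hnull 0, hnull R, hnull (2 * R)] with t a b c
    refine propext ?_
    change 0 ≤ t ↔ ((0 < t ∧ t < R) ∨ (R < t ∧ t < 2 * R)) ∨ 2 * R < t
    constructor
    · intro h
      have h' := lt_of_le_of_ne h (Ne.symm a)
      rcases lt_or_gt_of_ne b with b | b
      · exact Or.inl (Or.inl ⟨h', b⟩)
      · rcases lt_or_gt_of_ne c with c | c
        · exact Or.inl (Or.inr ⟨b, c⟩)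
        · exact Or.inr c
    · rintro ((h | h) | h)
      · exact h.1.le
      · linarith [h.1]
      · linarith
  have h2 : (Ici 0 ×ˢ J : Set (ℝ × ℝ)) =ᵐ[volume]
      (((Ioo 0 R ∪ Ioo R (2 * R)) ∪ Ioi (2 * R)) ×ˢ J : Set (ℝ × ℝ)) :=
    Measure.set_prod_ae_eq h1 (ae_eq_refl J)
  have h3 : ∫ p in Ioi (2 * R) ×ˢ J, f p = 0 :=
    setIntegral_eq_zero_of_forall_eq_zero fun p hp => h0 p hp.1
  rw [setIntegral_congr_set h2, union_prod, union_prod, setIntegral_union, setIntegral_union,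
    integral_reflect, h3, add_zero, integral_add]
  · exact hf.integrableOn
  · have : MeasurePreserving (fun p : ℝ × ℝ => (2 * R - p.1, p.2)) volume volume :=
      (Measure.measurePreserving_sub_left volume (2 * R)).prod (MeasurePreserving.id volume)
    exact (this.integrable_comp_of_integrable hf).integrableOn
  · rw [Set.disjoint_left]
    rintro p ⟨a, _⟩ ⟨b, _⟩
    exact absurd a.2 (not_lt.2 b.1.le)
  · exact measurableSet_Ioo.prod hJ
  · exact hf.integrableOn
  · exact hf.integrableOn
  · rw [Set.disjoint_left]
    rintro p (⟨a, _⟩ | ⟨a, _⟩) ⟨b, _⟩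
    · have : 2 * R < p.1 := b
      linarith [a.2]
    · have : 2 * R < p.1 := b
      linarith [a.2]
  · exact measurableSet_Ioi.prod hJ
  · exact hf.integrableOn
  · exact hf.integrableOn

lemma integrableOn_box {F : ℝ × ℝ → ℝ} (hF : Continuous F) (a b c d : ℝ) :
    IntegrableOn F (Ioo a b ×ˢ Ioo c d) :=
  (hF.continuousOn.integrableOn_compact (isCompact_Icc.prod isCompact_Icc)).mono_set
    (prod_mono Ioo_subset_Icc_self Ioo_subset_Icc_self)

/-- Iterated integration over a rectangle, first coordinate innermost. -/
lemma integral_box {F : ℝ × ℝ → ℝ} (hF : Continuous F) {a b : ℝ} (hab : a ≤ b) (c d : ℝ) :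
    ∫ p in Ioo a b ×ˢ Ioo c d, F p = ∫ y in Ioo c d, ∫ x in a..b, F (x, y) := by
  have hF' : Continuous fun p : ℝ × ℝ => F p.swap := hF.comp continuous_swap
  rw [integral_swap_slab, Measure.volume_eq_prod, setIntegral_prod _ (integrableOn_box hF' c d a b)]
  refine setIntegral_congr_fun measurableSet_Ioo fun y _ => ?_
  simp only [Prod.swap_prod_mk]
  rw [integral_Ioo_eq_interval hab]

lemma integrableOn_trace {u : ℝ × ℝ → ℝ} (hu : Continuous u) :
    IntegrableOn (fun y => u (0, y) ^ 2) (Ioo (-1 : ℝ) 0) := by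
  have : Continuous fun y => u (0, y) ^ 2 := by fun_prop
  exact (this.continuousOn.integrableOn_compact isCompact_Icc).mono_set Ioo_subset_Icc_self

lemma integrableOn_inner {F : ℝ × ℝ → ℝ} (hF : Continuous F) (a b c d : ℝ) :
    IntegrableOn (fun y => ∫ x in a..b, F (x, y)) (Ioo c d) := by
  have : Continuous fun y => ∫ x in a..b, F (x, y) :=
    intervalIntegral.continuous_parametric_intervalIntegral_of_continuous' (by fun_prop) a b
  exact (this.continuousOn.integrableOn_compact isCompact_Icc).mono_set Ioo_subset_Icc_self

/-- Trace estimate on the cut between the core and an arm: `riccati` with `q(x) = 1 / (x + 2)`,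
which solves `q' + q² = 0`. -/
lemma trace_le {u : ℝ × ℝ → ℝ} (hu : ContDiff ℝ 1 u)
    (h0 : ∀ y ∈ Ioo (-1 : ℝ) 0, u (-1, y) = 0) :
    ∫ y in Ioo (-1 : ℝ) 0, u (0, y) ^ 2 ≤
      2 * ∫ p in Ioo (-1 : ℝ) 0 ×ˢ Ioo (-1 : ℝ) 0, (fderiv ℝ u p (1, 0)) ^ 2 := by
  have hF : Continuous fun p => (fderiv ℝ u p (1, 0)) ^ 2 := (continuous_fderiv_dir hu _).pow 2
  rw [integral_box hF (by norm_num), ← integral_const_mul]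
  refine setIntegral_mono_on (integrableOn_trace hu.continuous)
    ((integrableOn_inner hF _ _ _ _).const_mul 2) measurableSet_Ioo fun y hy => ?_
  have := riccati (f := fun x => u (x, y)) (f' := fun x => fderiv ℝ u (x, y) (1, 0))
    (q := fun x => (x + 2)⁻¹) (q' := fun x => -1 / (x + 2) ^ 2)
    (φ := fun x => (fderiv ℝ u (x, y) (1, 0)) ^ 2) (a := -1) (b := 0) (by norm_num)
    (fun t _ => hasDerivAt_fst (hu.differentiable one_ne_zero) t y)
    (fun t ht => ((hasDerivAt_id t).add_const (2 : ℝ)).inv (by simp; linarith [ht.1]))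
    (hF.comp (by fun_prop : Continuous fun x : ℝ => (x, y))).continuousOn ?_
  · rw [h0 y hy] at this
    norm_num at this
    linarith
  · intro t ht
    have ht' : t + 2 ≠ 0 := by linarith [ht.1]
    have e : -1 / (t + 2) ^ 2 = -((t + 2)⁻¹) ^ 2 := by field_simp
    rw [e]
    nlinarith [sq_nonneg (fderiv ℝ u (t, y) (1, 0) - (t + 2)⁻¹ * u (t, y))]

/-! ### Energy balance on an arm -/

lemma hasDerivAt_profile (ω R k t : ℝ) :
    HasDerivAt (fun t => (1 + Real.tanh (ω * (R - t)) / k) / 2)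
      (-(ω * (1 - Real.tanh (ω * (R - t)) ^ 2) / k / 2)) t := by
  have h1 : HasDerivAt (fun t : ℝ => ω * (R - t)) (-ω) t :=
    (((hasDerivAt_id t).const_sub R).const_mul ω).congr_deriv (by ring)
  have h2 := (hasDerivAt_tanh (ω * (R - t))).comp t h1
  exact (((h2.div_const k).const_add 1).div_const 2).congr_deriv (by ring)

lemma gradSq2_congr {f g : ℝ × ℝ → ℝ} {s : Set (ℝ × ℝ)} (hs : IsOpen s) (h : ∀ p ∈ s, f p = g p)
    {p : ℝ × ℝ} (hp : p ∈ s) : gradSq2 f p = gradSq2 g p := by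
  have : f =ᶠ[nhds p] g := by filter_upwards [hs.mem_nhds hp] with q hq using h q hq
  rw [gradSq2, gradSq2, this.fderiv_eq]

/-- The squared gradient of the trial function on the first half `(0, R)` of an arm; the profile is
`(1 + τ / k) / 2` there. -/
lemma gradSq2_ext_arm {ω R : ℝ} (hω : 0 < ω) (hR : 0 < R) {u : ℝ × ℝ → ℝ} (hu : Differentiable ℝ u)
    {p : ℝ × ℝ} (hp : p ∈ Ioo 0 R ×ˢ Ioo (-1 : ℝ) 0) {τ k : ℝ}
    (hτ : τ = Real.tanh (ω * (R - p.1))) (hk : k = Real.tanh (ω * R)) :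
    gradSq2 (extU ω R u) p =
      ((1 + τ / k) / 2 * fderiv ℝ u p (1, 0) - u p * (ω * (1 - τ ^ 2) / k / 2)) ^ 2 +
      ((1 + τ / k) / 2 * fderiv ℝ u p (0, 1)) ^ 2 := by
  subst hτ hk
  rw [gradSq2_congr (isOpen_Ioo.prod isOpen_Ioo) (fun q hq => extU_arm hω hR u
    ⟨Ioo_subset_Icc_self hq.1, hq.2⟩) hp, gradSq2,
    fderiv_mul_fst (β := fun t => (1 + Real.tanh (ω * (R - t)) / Real.tanh (ω * R)) / 2)
      (hasDerivAt_profile ω R _ p.1) (hu p),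
    fderiv_mul_fst (β := fun t => (1 + Real.tanh (ω * (R - t)) / Real.tanh (ω * R)) / 2)
      (hasDerivAt_profile ω R _ p.1) (hu p)]
  ring

/-- The squared gradient of the trial function on the reflected half `(R, 2R)` of an arm, expressed
at the mirror point `p`; the profile is `(1 - τ / k) / 2` there. -/
lemma gradSq2_ext_arm' {ω R : ℝ} (hω : 0 < ω) (hR : 0 < R) {u : ℝ × ℝ → ℝ}
    (hu : Differentiable ℝ u) {p : ℝ × ℝ} (hp : p ∈ Ioo 0 R ×ˢ Ioo (-1 : ℝ) 0) {τ k : ℝ}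
    (hτ : τ = Real.tanh (ω * (R - p.1))) (hk : k = Real.tanh (ω * R)) :
    gradSq2 (extU ω R u) (2 * R - p.1, p.2) =
      ((1 - τ / k) / 2 * fderiv ℝ u p (1, 0) + u p * (ω * (1 - τ ^ 2) / k / 2)) ^ 2 +
      ((1 - τ / k) / 2 * fderiv ℝ u p (0, 1)) ^ 2 := by
  obtain ⟨⟨h1, h2⟩, h3⟩ := hp
  have hq : (2 * R - p.1, p.2) ∈ Ioo R (2 * R) ×ˢ Ioo (-1 : ℝ) 0 :=
    ⟨⟨by simp only; linarith, by simp only; linarith⟩, h3⟩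
  have e1 : 2 * R - (2 * R - p.1) = p.1 := by ring
  have e2 : Real.tanh (ω * (R - (2 * R - p.1))) = -τ := by
    rw [hτ, ← Real.tanh_neg]; congr 1; ring
  have hd := fun v => fderiv_reflect hu (2 * R) (2 * R - p.1, p.2) v
  rw [gradSq2_congr (isOpen_Ioo.prod isOpen_Ioo) (fun q hq => extU_arm' hω hR u
    ⟨Ioo_subset_Icc_self hq.1, hq.2⟩) hq, gradSq2,
    fderiv_mul_fst (β := fun t => (1 + Real.tanh (ω * (R - t)) / Real.tanh (ω * R)) / 2)
      (hasDerivAt_profile ω R _ _) (hd 0).1,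
    fderiv_mul_fst (β := fun t => (1 + Real.tanh (ω * (R - t)) / Real.tanh (ω * R)) / 2)
      (hasDerivAt_profile ω R _ _) (hd 0).1, (hd _).2, (hd _).2]
  simp only [e1, e2, ← hk, neg_zero, mul_zero, add_zero, mul_one]
  have e3 : ((-1 : ℝ), (0 : ℝ)) = -(1, 0) := by simp
  rw [e3, map_neg]
  ring

/-- Energy balance on an arm: the trial function costs on the doubled and infinite arm at most the
energy of `u` on `(0, R) × I`, up to an exponentially small trace term. After adding the two
reflected halves, the transverse part is controlled by Poincaré's inequality and the longitudinal
part is a perfect square up to an exact derivative. -/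
lemma arm_le {ω R : ℝ} (hω : 0 < ω) (hR : 0 < R) {u : ℝ × ℝ → ℝ} (hu : AdmR R u) :
    ∫ p in Ici 0 ×ˢ Ioo (-1 : ℝ) 0,
        (gradSq2 (extU ω R u) p - (π ^ 2 - ω ^ 2) * extU ω R u p ^ 2) ≤
      (∫ p in Ioo 0 R ×ˢ Ioo (-1 : ℝ) 0, (gradSq2 u p - (π ^ 2 - ω ^ 2) * u p ^ 2)) +
        ω / 2 * ((Real.tanh (ω * R))⁻¹ - Real.tanh (ω * R)) *
          ∫ y in Ioo (-1 : ℝ) 0, u (0, y) ^ 2 := by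
  have hud := hu.1.differentiable one_ne_zero
  obtain ⟨K, hK⟩ := extU_lip (ω := ω) hR.le hu.1
  have hcs := extU_compact hω hR hu
  set k := Real.tanh (ω * R) with hk
  have hk0 : 0 < k := tanh_pos (mul_pos hω hR)
  obtain ⟨τ, hτ⟩ : ∃ τ : ℝ → ℝ, ∀ x, τ x = Real.tanh (ω * (R - x)) := ⟨_, fun _ => rfl⟩
  have hdτ : ∀ x, HasDerivAt τ (-(ω * (1 - τ x ^ 2))) x := fun x => by
    have h1 : HasDerivAt (fun t : ℝ => ω * (R - t)) (-ω) x :=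
      (((hasDerivAt_id x).const_sub R).const_mul ω).congr_deriv (by ring)
    have h2 := (hasDerivAt_tanh (ω * (R - x))).comp x h1
    exact (h2.congr_of_eventuallyEq (Filter.Eventually.of_forall hτ)).congr_deriv
      (by rw [hτ]; ring)
  have hτc : Continuous τ := continuous_iff_continuousAt.2 fun x => (hdτ x).continuousAt
  have hτk : ∀ x ∈ Icc 0 R, 0 ≤ τ x ∧ τ x ≤ k := by
    intro x hx
    constructor
    · rw [hτ]
      have := strictMono_tanh.monotone (show 0 ≤ ω * (R - x) from
        mul_nonneg hω.le (by linarith [hx.2]))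
      simpa using this
    · rw [hτ]
      exact strictMono_tanh.monotone (mul_le_mul_of_nonneg_left (by linarith [hx.1]) hω.le)
  have hA : ∀ x ∈ Icc 0 R, 0 ≤ (1 - (τ x / k) ^ 2) / 2 := by
    intro x hx
    obtain ⟨h1, h2⟩ := hτk x hx
    have h3 : τ x / k ≤ 1 := (div_le_one hk0).2 h2
    have h4 : 0 ≤ τ x / k := div_nonneg h1 hk0.le
    nlinarith
  have ca : Continuous fun p => fderiv ℝ u p (1, 0) := continuous_fderiv_dir hu.1 _
  have cb : Continuous fun p => fderiv ℝ u p (0, 1) := continuous_fderiv_dir hu.1 _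
  have cu : Continuous u := hu.1.continuous
  have cg : Continuous (gradSq2 u) := by unfold gradSq2; fun_prop
  -- With `α = (1 + τ/k)/2` and `1 - α` on the mirror half, `α² + (1 - α)² = 1 - (1 - (τ/k)²)/2`:
  -- the energy gain of `u` over its extension is `P + S`, where `P` is the transverse part and `S`
  -- the longitudinal part.
  set S : ℝ × ℝ → ℝ := fun p =>
    (1 - (τ p.1 / k) ^ 2) / 2 * (fderiv ℝ u p (1, 0) ^ 2 + ω ^ 2 * u p ^ 2) +
      (τ p.1 / k * (ω * (1 - τ p.1 ^ 2) / k) * fderiv ℝ u p (1, 0) * u p -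
        (ω * (1 - τ p.1 ^ 2) / k) ^ 2 / 2 * u p ^ 2) with hS
  have cS : Continuous S := by simp only [hS]; fun_prop
  set P : ℝ × ℝ → ℝ := fun p => (1 - (τ p.1 / k) ^ 2) / 2 *
    (fderiv ℝ u p (0, 1) ^ 2 - π ^ 2 * u p ^ 2) with hP
  have cP : Continuous P := by simp only [hP]; fun_prop
  have hsplit : ∫ p in Ici 0 ×ˢ Ioo (-1 : ℝ) 0,
      (gradSq2 (extU ω R u) p - (π ^ 2 - ω ^ 2) * extU ω R u p ^ 2) =
      ∫ p in Ioo 0 R ×ˢ Ioo (-1 : ℝ) 0,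
        ((gradSq2 u p - (π ^ 2 - ω ^ 2) * u p ^ 2) - (P p + S p)) := by
    rw [integral_arm_split (f := fun p => gradSq2 (extU ω R u) p -
      (π ^ 2 - ω ^ 2) * extU ω R u p ^ 2) ((integrable_gradSq2 hK hcs).sub
      ((integrable_sq hK.continuous hcs).const_mul _)) hR _ measurableSet_Ioo]
    · refine setIntegral_congr_fun (measurableSet_Ioo.prod measurableSet_Ioo) fun p hp => ?_
      have hp' := hp
      obtain ⟨⟨h1, h2⟩, h3⟩ := hp'
      have e1 : 2 * R - (2 * R - p.1) = p.1 := by ring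
      have e2 : Real.tanh (ω * (R - (2 * R - p.1))) = -τ p.1 := by
        rw [hτ, ← Real.tanh_neg]; congr 1; ring
      rw [gradSq2_ext_arm hω hR hud hp (τ := τ p.1) (hτ _) hk,
        gradSq2_ext_arm' hω hR hud hp (τ := τ p.1) (hτ _) hk,
        extU_arm hω hR u ⟨⟨h1.le, h2.le⟩, h3⟩,
        extU_arm' hω hR u (p := (2 * R - p.1, p.2))
          ⟨⟨by simp only; linarith, by simp only; linarith⟩, h3⟩]
      simp only [e1, e2, ← hk, ← hτ, hS, hP, gradSq2]
      field_simp
      ring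
    · intro p hp
      have h0 : ∀ q ∈ {q : ℝ × ℝ | 2 * R < q.1}, extU ω R u q = (fun _ => (0 : ℝ)) q := by
        intro q hq
        simp [extU, cutα_of_ge hω hR (le_of_lt hq)]
      have ho : IsOpen {q : ℝ × ℝ | 2 * R < q.1} := isOpen_lt continuous_const continuous_fst
      rw [gradSq2_congr ho h0 hp, h0 p hp]
      simp [gradSq2]
  have hPi := integrableOn_box cP 0 R (-1) 0
  have hSi := integrableOn_box cS 0 R (-1) 0
  have hPSi : IntegrableOn (fun p => P p + S p) (Ioo 0 R ×ˢ Ioo (-1 : ℝ) 0) := hPi.add hSi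
  have hE : Continuous fun p => gradSq2 u p - (π ^ 2 - ω ^ 2) * u p ^ 2 := by fun_prop
  have hEi := integrableOn_box hE 0 R (-1) 0
  rw [hsplit, integral_sub hEi hPSi, integral_add hPi hSi]
  have hPn : 0 ≤ ∫ p in Ioo 0 R ×ˢ Ioo (-1 : ℝ) 0, P p := by
    refine poincare_slab hu.1 measurableSet_Ioo (fun x hx => ⟨?_, ?_⟩)
      (a := fun x => (1 - (τ x / k) ^ 2) / 2) (fun x hx => hA x (Ioo_subset_Icc_self hx))
    · exact hu.zero hR (Or.inl (min_eq_right (by simp only; linarith [hx.1]))) hx.2.le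
        (by simp only; linarith)
    · exact hu.zero hR (Or.inr (min_eq_right (by simp only; linarith [hx.1]))) hx.2.le hR.le
  have hSn : -(ω / 2 * (k⁻¹ - k)) * ∫ y in Ioo (-1 : ℝ) 0, u (0, y) ^ 2 ≤
      ∫ p in Ioo 0 R ×ˢ Ioo (-1 : ℝ) 0, S p := by
    rw [integral_box cS hR.le, ← integral_const_mul]
    refine setIntegral_mono_on ((integrableOn_trace cu).const_mul _)
      (integrableOn_inner cS _ _ _ _) measurableSet_Ioo fun y _ => ?_
    -- `S` minus the exact derivative is `(1 - (τ/k)²)/2 * (∂₁u + ω τ u)²`.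
    have := riccati (f := fun x => u (x, y)) (f' := fun x => fderiv ℝ u (x, y) (1, 0))
      (q := fun x => -(ω / 2 * (1 - (k⁻¹) ^ 2)) * τ x)
      (q' := fun x => -(ω / 2 * (1 - (k⁻¹) ^ 2)) * -(ω * (1 - τ x ^ 2)))
      (φ := fun x => S (x, y)) (a := 0) (b := R) hR.le
      (fun t _ => hasDerivAt_fst hud t y)
      (fun t _ => (hdτ t).const_mul _)
      (cS.comp (by fun_prop : Continuous fun x : ℝ => (x, y))).continuousOn ?_
    · have e1 : τ R = 0 := by simp [hτ]
      have e2 : τ 0 = k := by simp [hτ, hk]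
      simp only [e1, e2] at this
      refine le_trans (le_of_eq ?_) this
      field_simp
      ring
    · intro x hx
      have := mul_nonneg (hA x (Ioo_subset_Icc_self hx))
        (sq_nonneg (fderiv ℝ u (x, y) (1, 0) + ω * τ x * u (x, y)))
      simp only [hS]
      rw [← sub_nonneg]
      refine this.trans (le_of_eq ?_)
      field_simp
      ring
  linarith

/-! ### Comparison of the two eigenvalues -/

lemma GamR_zero : GamR 0 = Ioo (-1 : ℝ) 0 ×ˢ Ioo (-1 : ℝ) 0 := by
  ext p
  simp only [mem_GamR_iff, mem_prod, mem_Ioo]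
  grind

lemma integrableOn_GamR {F : ℝ × ℝ → ℝ} (hF : Continuous F) (R : ℝ) : IntegrableOn F (GamR R) := by
  refine (hF.continuousOn.integrableOn_compact
    (isCompact_Icc (a := ((-1, -1) : ℝ × ℝ)) (b := (R, R)))).mono_set fun p hp => ?_
  obtain ⟨⟨a, b⟩, -, c, d⟩ := mem_GamR_iff.1 hp
  exact ⟨⟨a.le, b.le⟩, c.le, d.le⟩

lemma AdmR.swap {R : ℝ} {u : ℝ × ℝ → ℝ} (hu : AdmR R u) : AdmR R (u ∘ Prod.swap) := by
  refine ⟨contDiff_swap hu.1, fun p hp => hu.2 _ ?_⟩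
  have hG : Homeomorph.prodComm ℝ ℝ ⁻¹' GamR R = GamR R := by
    ext q
    simp only [mem_preimage, Homeomorph.coe_prodComm, mem_GamR_iff, Prod.fst_swap, Prod.snd_swap]
    tauto
  have hB : Homeomorph.prodComm ℝ ℝ ⁻¹' Box (R + 1) = Box (R + 1) := by
    ext q
    simp only [mem_preimage, Homeomorph.coe_prodComm, Box, mem_ofPred_eq, Prod.fst_swap,
      Prod.snd_swap]
    tauto
  have hG' := (Homeomorph.prodComm ℝ ℝ).preimage_frontier (GamR R)
  have hB' := (Homeomorph.prodComm ℝ ℝ).preimage_frontier (Box (R + 1))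
  rw [hG] at hG'
  rw [hB] at hB'
  have e : Prod.swap ⁻¹' DirB R = DirB R := by
    change Homeomorph.prodComm ℝ ℝ ⁻¹' DirB R = DirB R
    simp only [DirB, Sig, preimage_sdiff, preimage_inter, hG', hB']
  have hp2 : p ∈ Prod.swap ⁻¹' DirB R := e ▸ hp
  exact hp2

/-- The energy comparison behind the upper bound: testing `λ₁(Γ)` with `extU ω R u` and summing the
core and both arms, the loss is `ω / 2 (coth ωR - tanh ωR)` times the two traces on the segments joining
the core to the arms, which `trace_le` bounds by the Dirichlet energy in the core. -/
lemma energy_le {ω R : ℝ} (hω : 0 < ω) (hR : 0 < R) (hlam : lamG = π ^ 2 - ω ^ 2)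
    {u : ℝ × ℝ → ℝ} (hu : AdmR R u) :
    lamG * ∫ p in GamR R, u p ^ 2 ≤
      (1 + ω * ((Real.tanh (ω * R))⁻¹ - Real.tanh (ω * R))) * ∫ p in GamR R, gradSq2 u p := by
  have hu' := hu.swap
  obtain ⟨K, hK⟩ := extU_lip (ω := ω) hR.le hu.1
  have hcs := extU_compact hω hR hu
  have h0 := lamG_mul_le_lip hK hcs (fun p hp => extU_zero hω hR hu hp)
  have i1 := integrable_gradSq2 hK hcs
  have i2 := integrable_sq hK.continuous hcs
  have a1 := arm_le hω hR hu
  have a2 := arm_le hω hR hu'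
  have t1 := trace_le hu.1 fun y hy => hu.zero hR
    (Or.inl (min_eq_left (by simp only; linarith [hy.1]))) (by simp only; linarith)
    (by simp only; linarith [hy.2])
  have t2 := trace_le hu'.1 fun y hy => hu'.zero hR
    (Or.inl (min_eq_left (by simp only; linarith [hy.1]))) (by simp only; linarith)
    (by simp only; linarith [hy.2])
  rw [← hlam] at a1 a2
  set k := Real.tanh (ω * R) with hk
  have hk0 : 0 < k := tanh_pos (mul_pos hω hR)
  have hk1 : k < 1 := Real.tanh_lt_one _
  have hε : 0 ≤ ω / 2 * (k⁻¹ - k) := by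
    have : 1 ≤ k⁻¹ := (one_le_inv₀ hk0).2 hk1.le
    exact mul_nonneg (by linarith) (by linarith)
  have ca : Continuous fun p => fderiv ℝ u p (1, 0) := continuous_fderiv_dir hu.1 _
  have cb : Continuous fun p => fderiv ℝ u p (0, 1) := continuous_fderiv_dir hu.1 _
  have cu : Continuous u := hu.1.continuous
  have cg : Continuous (gradSq2 u) := by unfold gradSq2; fun_prop
  -- the energy functional of the trial function, split into the core and two arms
  have e1 : (∫ p in Gam, gradSq2 (extU ω R u) p) - lamG * ∫ p in Gam, extU ω R u p ^ 2 =
      ∫ p in Gam, (gradSq2 (extU ω R u) p - lamG * extU ω R u p ^ 2) := by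
    rw [integral_sub i1.integrableOn (i2.const_mul _).integrableOn, integral_const_mul]
  have e2 := integral_Gam_split (f := fun p => gradSq2 (extU ω R u) p - lamG * extU ω R u p ^ 2)
    le_rfl (i1.sub (i2.const_mul lamG)).integrableOn
  have e3 : ∫ p in GamR 0, (gradSq2 (extU ω R u) p - lamG * extU ω R u p ^ 2) =
      ∫ p in GamR 0, (gradSq2 u p - lamG * u p ^ 2) := by
    refine setIntegral_congr_fun (isOpen_GamR 0).measurableSet fun p hp => ?_
    rw [extU_core hω hR u hp, gradSq2_congr (isOpen_GamR 0) (fun q hq => extU_core hω hR u hq) hp]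
  have cE : Continuous fun p => gradSq2 u p - lamG * u p ^ 2 := by fun_prop
  have e4 := integral_GamR_split hR.le (integrableOn_GamR cE R)
  have hae : ∀ F : ℝ × ℝ → ℝ, ∫ p in Ico 0 R ×ˢ Ioo (-1 : ℝ) 0, F p =
      ∫ p in Ioo 0 R ×ˢ Ioo (-1 : ℝ) 0, F p := fun F =>
    setIntegral_congr_set (Measure.set_prod_ae_eq Ioo_ae_eq_Ico.symm (ae_eq_refl _))
  rw [hae, hae] at e4
  have e5 : (∫ p in GamR R, gradSq2 u p) - lamG * ∫ p in GamR R, u p ^ 2 =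
      ∫ p in GamR R, (gradSq2 u p - lamG * u p ^ 2) := by
    have cu2 : Continuous fun p => u p ^ 2 := by fun_prop
    rw [integral_sub (integrableOn_GamR cg R)
      ((integrableOn_GamR cu2 R).const_mul lamG), integral_const_mul]
  rw [← extU_swap] at a2
  simp only [gradSq2_swap, Function.comp] at a2
  -- the two traces are controlled by the energy in the core
  have e6 : (∫ p in Ioo (-1 : ℝ) 0 ×ˢ Ioo (-1 : ℝ) 0, (fderiv ℝ u p (1, 0)) ^ 2) +
      (∫ p in Ioo (-1 : ℝ) 0 ×ˢ Ioo (-1 : ℝ) 0, (fderiv ℝ (u ∘ Prod.swap) p (1, 0)) ^ 2) =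
      ∫ p in GamR 0, gradSq2 u p := by
    have s1 : ∫ p in Ioo (-1 : ℝ) 0 ×ˢ Ioo (-1 : ℝ) 0, (fderiv ℝ (u ∘ Prod.swap) p (1, 0)) ^ 2 =
        ∫ p in Ioo (-1 : ℝ) 0 ×ˢ Ioo (-1 : ℝ) 0, (fderiv ℝ u p (0, 1)) ^ 2 := by
      rw [integral_swap_slab fun p => (fderiv ℝ u p (0, 1)) ^ 2]
      simp only [fderiv_swap, Prod.swap_prod_mk]
    rw [s1, GamR_zero]
    exact (integral_add (integrableOn_box (ca.pow 2) _ _ _ _)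
      (integrableOn_box (cb.pow 2) _ _ _ _)).symm
  have e7 : ∫ p in GamR 0, gradSq2 u p ≤ ∫ p in GamR R, gradSq2 u p := by
    refine setIntegral_mono_set (integrableOn_GamR cg R)
      (Filter.Eventually.of_forall fun p => gradSq2_nonneg u p) (LE.le.eventuallyLE ?_)
    intro p hp
    rw [mem_GamR_iff] at hp ⊢
    exact ⟨hp.1, hp.2.1, by linarith [hp.2.2.1], by linarith [hp.2.2.2]⟩
  simp only [Function.comp_apply, Prod.swap_prod_mk] at t2 a2
  have b := mul_le_mul_of_nonneg_left (add_le_add t1 t2) hε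
  have b' := mul_le_mul_of_nonneg_left e7 hε
  rw [← mul_add, e6] at b
  nlinarith

lemma lamG_sub_le {ω R : ℝ} (hω : 0 < ω) (hR : 0 < R) (hlam : lamG = π ^ 2 - ω ^ 2) :
    lamG - lamR R ≤ lamG * (ω * ((Real.tanh (ω * R))⁻¹ - Real.tanh (ω * R))) := by
  set δ := ω * ((Real.tanh (ω * R))⁻¹ - Real.tanh (ω * R)) with hδ
  have hδ0 : 0 ≤ δ := by
    have hk0 := tanh_pos (mul_pos hω hR)
    have hk1 : Real.tanh (ω * R) < 1 := Real.tanh_lt_one _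
    have : 1 ≤ (Real.tanh (ω * R))⁻¹ := (one_le_inv₀ hk0).2 hk1.le
    exact mul_nonneg hω.le (by linarith)
  have key : lamG / (1 + δ) ≤ lamR R := by
    refine le_csInf ?_ ?_
    · obtain ⟨u, h1, h2, h3, h4⟩ := exists_bump
      refine ⟨_, u, admR_of_tsupport h1 h3 R, h4 _ fun p hp => ?_, rfl⟩
      rw [mem_GamR_iff] at hp ⊢
      exact ⟨hp.1, hp.2.1, by linarith [hp.2.2.1], by linarith [hp.2.2.2]⟩
    · rintro r ⟨u, hu, hN, rfl⟩
      have hN0 : 0 ≤ ∫ p in GamR R, u p ^ 2 := integral_nonneg fun p => sq_nonneg _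
      rw [div_le_div_iff₀ (by linarith) (lt_of_le_of_ne hN0 (Ne.symm hN)), mul_comm _ (1 + δ)]
      exact energy_le hω hR hlam hu
  have h1 : lamG * (1 - δ) ≤ lamG / (1 + δ) := by
    rw [le_div_iff₀ (by linarith)]
    nlinarith [lamG_nonneg, mul_nonneg lamG_nonneg (sq_nonneg δ)]
  linarith

/-- `coth s - tanh s = 2 / sinh (2 s)` decays like `4 e^{-2s}`. -/
lemma coth_sub_tanh_le {s s₀ : ℝ} (h0 : 0 < s₀) (hs : s₀ ≤ s) :
    (Real.tanh s)⁻¹ - Real.tanh s ≤ 4 / (1 - Real.exp (-(4 * s₀))) * Real.exp (-(2 * s)) := by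
  have e0 : Real.exp s * Real.exp (-s) = 1 := by rw [← Real.exp_add]; simp
  have e1 : Real.exp (-(2 * s)) = Real.exp (-s) ^ 2 := by
    rw [← Real.exp_nat_mul]; congr 1; push_cast; ring
  have e2 : Real.exp (-(4 * s)) = Real.exp (-s) ^ 4 := by
    rw [← Real.exp_nat_mul]; congr 1; push_cast; ring
  have p2 := Real.exp_pos (-s)
  have hs0 : 0 < s := h0.trans_le hs
  have l1 : Real.exp (-(4 * s)) ≤ Real.exp (-(4 * s₀)) := Real.exp_le_exp.2 (by linarith)
  have l2 : Real.exp (-(4 * s₀)) < 1 := Real.exp_lt_one_iff.2 (by linarith)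
  have l3 : Real.exp (-s) < 1 := Real.exp_lt_one_iff.2 (by linarith)
  have hx : Real.exp s = (Real.exp (-s))⁻¹ := by rw [Real.exp_neg, inv_inv]
  have key : (Real.tanh s)⁻¹ - Real.tanh s =
      4 / (1 - Real.exp (-(4 * s))) * Real.exp (-(2 * s)) := by
    rw [Real.tanh_eq, e1, e2, hx]
    generalize Real.exp (-s) = y at *
    have y2 : y ^ 2 < 1 := by nlinarith
    have d1 : y⁻¹ - y ≠ 0 := by
      have : y⁻¹ - y = (1 - y ^ 2) / y := by field_simp
      rw [this]
      exact (div_pos (by linarith) p2).ne'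
    have d2 : y⁻¹ + y ≠ 0 := by positivity
    have d3 : 1 - y ^ 4 ≠ 0 := by nlinarith [sq_nonneg y]
    have d4 : 1 - y ^ 2 ≠ 0 := by linarith
    have d5 : 1 + y ^ 2 ≠ 0 := by positivity
    have f1 : y⁻¹ - y = (1 - y ^ 2) / y := by field_simp
    have f2 : y⁻¹ + y = (1 + y ^ 2) / y := by field_simp
    have f3 : 1 - y ^ 4 = (1 - y ^ 2) * (1 + y ^ 2) := by ring
    rw [f1, f2, f3]
    field_simp
    ring
  rw [key]
  gcongr

/-- Corollary 2.4: exponential convergence of the first mixed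
eigenvalue of the truncated guide to the first Dirichlet eigenvalue of the infinite
broken guide: there is `C₁` such that for all `R ≥ 0`,
`0 ≤ λ₁(Γ) − λ₁(Γ_R) ≤ C₁ e^{−2Rω}` with `ω = √(π² − λ₁(Γ))`. -/
theorem exponential_convergence_lamR :
    ∃ C₁ : ℝ, ∀ R : ℝ, 0 ≤ R →
      0 ≤ lamG - lamR R ∧ lamG - lamR R ≤ C₁ * Real.exp (-2 * R * omega) := by
  have hlt := lamG_lt
  have hω : 0 < omega := Real.sqrt_pos.2 (by linarith)
  have hlam : lamG = π ^ 2 - omega ^ 2 := by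
    rw [omega, Real.sq_sqrt (by linarith)]; ring
  have hG := lamG_nonneg
  have hden : 0 < 1 - Real.exp (-(4 * omega)) := by
    linarith [Real.exp_lt_one_iff.2 (show -(4 * omega) < 0 by linarith)]
  set C : ℝ := 4 / (1 - Real.exp (-(4 * omega))) with hC
  have hC0 : 0 ≤ C := by positivity
  refine ⟨lamG * Real.exp (2 * omega) + lamG * (omega * C), fun R hR => ?_⟩
  refine ⟨sub_nonneg.2 (lamR_le_lamG hR), ?_⟩
  have hE := Real.exp_pos (-2 * R * omega)
  have n1 : 0 ≤ lamG * Real.exp (2 * omega) * Real.exp (-2 * R * omega) := by positivity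
  have n2 : 0 ≤ lamG * (omega * C) * Real.exp (-2 * R * omega) := by positivity
  rw [add_mul]
  rcases le_or_gt 1 R with h1 | h1
  · have a := lamG_sub_le hω (by linarith) hlam (R := R)
    have b := coth_sub_tanh_le hω (show omega ≤ omega * R by nlinarith)
    rw [← hC, show -(2 * (omega * R)) = -2 * R * omega by ring] at b
    have c := mul_le_mul_of_nonneg_left (mul_le_mul_of_nonneg_left b hω.le) hG
    have e : lamG * (omega * (C * Real.exp (-2 * R * omega))) =
      lamG * (omega * C) * Real.exp (-2 * R * omega) := by ring
    linarith
  · have a : 1 ≤ Real.exp (2 * omega) * Real.exp (-2 * R * omega) := by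
      rw [← Real.exp_add, Real.one_le_exp_iff]
      nlinarith
    have b := mul_le_mul_of_nonneg_left a hG
    have c := lamR_nonneg R
    rw [← mul_assoc] at b
    linarith
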